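/- arXiv:math/9911269 — 2 statements merged into one kernel-verified Lean document; each statement's English description precedes it below -/
import Mathlib

section
/- Let E be an oriented real vector bundle with (n+1)-dimensional fibre over a smooth manifold M, equipped with a metric and an SO(n+1)-connection ω with curvature Ω, and let Ψ be the n-form on the unit sphere bundle of E defined from (u, θ, ω, Ω) as in the construction. Then dΨ = 0 if n = 2m is even, and dΨ = −E(Ω) if n = 2m+1 is odd, where E(Ω) = (1/((4π)^{m+1}(m+1)!)) Σ_τ (−1)^τ Ω_{τ(1)τ(2)} ⋯ Ω_{τ(n)τ(n+1)} is the Euler curvature form of E (the sum over all permutations τ of {1,…,n+1}). -/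
/-!
STATEMENT 2 (Proposition 1.1(1) of "A secondary Chern–Euler class"):
Let `E` be an oriented real vector bundle with `(n+1)`-dimensional fibre over
a smooth manifold `M`, with a metric and an `SO(n+1)`-connection `ω` with
curvature `Ω = dω + ω ∧ ω`, and let `Ψ` be the `n`-form on the unit sphere
bundle of `E` built from `(u, θ, ω, Ω)` as in Chern's construction.  Then
`dΨ = 0` if `n` is even, and `dΨ = −E(Ω)` if `n = 2m+1` is odd, where
`E(Ω) = (1/((4π)^{m+1}(m+1)!)) Σ_τ (−1)^τ Ω_{τ(1)τ(2)} ⋯ Ω_{τ(n)τ(n+1)}`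
is the Euler curvature form of `E`.

Mathlib has no differential forms on manifolds (nor principal connections),
so the calculus of (locally defined) differential forms on the sphere bundle
is abstracted into an associative `ℝ`-algebra `A` together with an `ℝ`-linear
map `d` (the exterior differential).  The generators are the components
`u i : A` (degree 0) of the tautological unit vector with respect to a local
oriented orthonormal frame, the connection forms `ω i j` (degree 1), the
forms `θ i = d(u i) + Σⱼ ω i j * u j` (degree 1) and the curvature forms
`Ω i j = d(ω i j) + Σₖ ω i k * ω k j` (degree 2).  The hypotheses record the
structure equations, `Σ uᵢ² = 1` (the unit sphere bundle), skew-symmetry of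
`ω` (an `SO(n+1)`-connection), the graded commutation rules for the degrees
of the generators, `d ∘ d = 0`, and the graded Leibniz rule on products with
the generators.  Indices are `0`-based: the paper's `u_{τ(1)}` is `u (τ 0)`.
-/

open scoped Nat

noncomputable section

/-- The volume `c_n` of the Euclidean `n`-sphere: `2(2π)^m/(n−1)‼` for
`n = 2m` and `(2π)^{m+1}/(n−1)‼` for `n = 2m+1`. -/
def sphereVolume (n : ℕ) : ℝ :=
  if Even n then 2 * (2 * Real.pi) ^ (n / 2) / ((n - 1)‼ : ℝ)
  else (2 * Real.pi) ^ (n / 2 + 1) / ((n - 1)‼ : ℝ)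

/-- The `n`-form `Ψ_j = Σ_τ (−1)^τ u_{τ(1)} θ_{τ(2)} ⋯ θ_{τ(n−2j+1)}
Ω_{τ(n−2j+2)τ(n−2j+3)} ⋯ Ω_{τ(n)τ(n+1)}`, the sum over all permutations `τ`
of the `n+1` indices (written `0`-based). -/
def psiJ {A : Type*} [Ring A] (n : ℕ)
    (u θ : Fin (n + 1) → A) (Ω : Fin (n + 1) → Fin (n + 1) → A)
    (j : ℕ) (hj : 2 * j ≤ n) : A :=
  ∑ τ : Equiv.Perm (Fin (n + 1)),
    (Equiv.Perm.sign τ : ℤ) •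
      (u (τ 0) *
        (List.ofFn fun i : Fin (n - 2 * j) =>
          θ (τ ⟨i.1 + 1, by have := i.isLt; omega⟩)).prod *
        (List.ofFn fun t : Fin j =>
          Ω (τ ⟨n - 2 * j + 1 + 2 * t.1, by have := t.isLt; omega⟩)
            (τ ⟨n - 2 * j + 2 + 2 * t.1, by have := t.isLt; omega⟩)).prod)

/-- The `n`-form
`Ψ = (1/((n−1)‼ c_n)) Σ_{j=0}^m Ψ_j/(2^j j! (n−2j)‼)`, where `m = n/2`. -/
def psiForm {A : Type*} [Ring A] [Algebra ℝ A] (n : ℕ)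
    (u θ : Fin (n + 1) → A) (Ω : Fin (n + 1) → Fin (n + 1) → A) : A :=
  (((n - 1)‼ : ℝ) * sphereVolume n)⁻¹ •
    ∑ j : Fin (n / 2 + 1),
      ((2 ^ j.1 * j.1.factorial * (n - 2 * j.1)‼ : ℝ))⁻¹ •
        psiJ n u θ Ω j.1 (by have := j.isLt; omega)

/-- The Euler curvature form (for `n = 2m+1` odd, so that `E` has even rank
`n+1 = 2m+2` and `m + 1 = n/2 + 1`):
`E(Ω) = (1/((4π)^{m+1}(m+1)!)) Σ_τ (−1)^τ Ω_{τ(1)τ(2)} ⋯ Ω_{τ(n)τ(n+1)}`. -/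
def eulerCurvatureForm {A : Type*} [Ring A] [Algebra ℝ A] (n : ℕ)
    (Ω : Fin (n + 1) → Fin (n + 1) → A) : A :=
  ((4 * Real.pi) ^ (n / 2 + 1) * ((n / 2 + 1).factorial : ℝ))⁻¹ •
    ∑ τ : Equiv.Perm (Fin (n + 1)),
      (Equiv.Perm.sign τ : ℤ) •
        (List.ofFn fun t : Fin ((n + 1) / 2) =>
          Ω (τ ⟨2 * t.1, by have := t.isLt; omega⟩)
            (τ ⟨2 * t.1 + 1, by have := t.isLt; omega⟩)).prod

namespace ChernPf

section alt
variable {A : Type*} [Ring A] {n : ℕ}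

/-- Extend an index tuple to all naturals. -/
def ext (τ : Fin (n + 1) → Fin (n + 1)) : ℕ → Fin (n + 1) :=
  fun i => if h : i < n + 1 then τ ⟨i, h⟩ else 0

/-- Alternating sum. -/
def Alt (T : (ℕ → Fin (n + 1)) → A) : A :=
  ∑ τ : Equiv.Perm (Fin (n + 1)), (Equiv.Perm.sign τ : ℤ) • T (ext τ)

lemma ext_of_lt (τ : Fin (n + 1) → Fin (n + 1)) {i : ℕ} (h : i < n + 1) :
    ext τ i = τ ⟨i, h⟩ := by simp [ext, h]

lemma ext_update (τ : Fin (n + 1) → Fin (n + 1)) (p k : Fin (n + 1)) :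
    ext (Function.update τ p k) = Function.update (ext τ) p.1 k := by
  funext i
  by_cases h : i < n + 1
  · by_cases hi : i = p.1
    · subst hi; simp only [ext, h, dite_true, Function.update_self]
    · have : (⟨i, h⟩ : Fin (n + 1)) ≠ p := fun e => hi (by rw [← e])
      simp [ext, h, hi, this]
  · have hi : i ≠ p.1 := by have := p.isLt; omega
    simp [ext, h, hi]

lemma ext_swap (τ : Equiv.Perm (Fin (n + 1))) {p q : ℕ} (hp : p < n + 1) (hq : q < n + 1) :
    ext (τ * Equiv.swap ⟨p, hp⟩ ⟨q, hq⟩ : Equiv.Perm (Fin (n + 1))) = ext τ ∘ Equiv.swap p q := by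
  funext i
  by_cases h : i < n + 1
  · by_cases h1 : i = p
    · subst h1; simp [ext, h, hq]
    · by_cases h2 : i = q
      · subst h2; simp [ext, h, hp]
      · simp only [Function.comp, Equiv.swap_apply_of_ne_of_ne h1 h2]
        rw [ext_of_lt _ h, ext_of_lt _ h, Equiv.Perm.mul_apply, Equiv.swap_apply_of_ne_of_ne]
        · simpa using h1
        · simpa using h2
  · have h1 : i ≠ p := by omega
    have h2 : i ≠ q := by omega
    simp [ext, h, Equiv.swap_apply_of_ne_of_ne h1 h2]

lemma alt_swap (T T' : (ℕ → Fin (n + 1)) → A) (p q : ℕ) (hp : p < n + 1) (hq : q < n + 1)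
    (hpq : p ≠ q) (h : ∀ σ, T (σ ∘ Equiv.swap p q) = T' σ) : Alt T' = - Alt T := by
  unfold Alt
  rw [← Equiv.sum_comp (Equiv.mulRight (Equiv.swap (⟨p, hp⟩ : Fin (n + 1)) ⟨q, hq⟩)),
    ← Finset.sum_neg_distrib]
  refine Finset.sum_congr rfl fun τ _ => ?_
  have hne : (⟨p, hp⟩ : Fin (n + 1)) ≠ ⟨q, hq⟩ := by simpa using hpq
  rw [Equiv.coe_mulRight, ext_swap, ← h, Equiv.Perm.sign_mul, Equiv.Perm.sign_swap hne]
  have : (ext τ ∘ Equiv.swap p q) ∘ Equiv.swap p q = ext τ := by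
    funext i; simp
  rw [this]; simp

lemma alt_add (T T' : (ℕ → Fin (n + 1)) → A) :
    Alt (fun σ => T σ + T' σ) = Alt T + Alt T' := by
  simp [Alt, smul_add, Finset.sum_add_distrib]

lemma alt_neg (T : (ℕ → Fin (n + 1)) → A) :
    Alt (fun σ => - T σ) = - Alt T := by
  simp [Alt, smul_neg, Finset.sum_neg_distrib]

lemma alt_sub (T T' : (ℕ → Fin (n + 1)) → A) :
    Alt (fun σ => T σ - T' σ) = Alt T - Alt T' := by
  simp only [sub_eq_add_neg, alt_add, alt_neg]

lemma alt_zero : Alt (fun _ : (ℕ → Fin (n + 1)) => (0 : A)) = 0 := by simp [Alt]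

lemma alt_sum {κ : Type*} (s : Finset κ) (T : κ → (ℕ → Fin (n + 1)) → A) :
    Alt (fun σ => ∑ k ∈ s, T k σ) = ∑ k ∈ s, Alt (T k) := by
  simp only [Alt, Finset.smul_sum]
  rw [Finset.sum_comm]

lemma alt_mul_left (c : A) (T : (ℕ → Fin (n + 1)) → A) :
    Alt (fun σ => c * T σ) = c * Alt T := by
  simp only [Alt, Finset.mul_sum, mul_smul_comm]

/-- Skew-symmetrisation over one more index than available vanishes. -/
lemma alt_exchange (v : Fin (n + 1) → A) (k : Fin (n + 1)) (T : (ℕ → Fin (n + 1)) → A) :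
    Alt (fun σ => ∑ p ∈ Finset.range (n + 1), v (σ p) * T (Function.update σ p k))
      = v k * Alt T := by
  classical
  rw [← alt_mul_left]
  have key : ∀ τ : Equiv.Perm (Fin (n + 1)),
      ∑ p ∈ Finset.range (n + 1), v (ext τ p) * T (Function.update (ext τ) p k)
      = v k * T (ext τ) + ∑ p : Fin (n + 1),
        (if τ p = k then 0 else v (τ p) * T (ext (Function.update τ p k))) := by
    intro τ
    rw [Finset.sum_range]
    have h1 : v k * T (ext τ) = ∑ p : Fin (n + 1), if τ p = k then v k * T (ext τ) else 0 := by
      have : ∀ p, τ p = k ↔ p = τ.symm k := fun p => by rw [Equiv.eq_symm_apply]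
      simp [this]
    rw [h1, ← Finset.sum_add_distrib]
    refine Finset.sum_congr rfl fun p _ => ?_
    rw [ext_of_lt _ p.isLt, ← ext_update]
    split_ifs with h
    · have : Function.update (⇑τ) p k = τ := by rw [← h]; simp
      simp [this, h]
    · simp
  unfold Alt
  simp only [key, smul_add, Finset.sum_add_distrib]
  rw [add_eq_left]
  simp only [Finset.smul_sum]
  rw [← Finset.sum_product']
  -- involution
  refine Finset.sum_involution
    (fun x _ => (x.1 * Equiv.swap x.2 (x.1.symm k), x.1.symm k)) ?_ ?_ ?_ ?_
  · rintro ⟨τ, p⟩ -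
    by_cases h : τ p = k
    · have : τ.symm k = p := by rw [← h]; simp
      simp [h, this]
    · have hne : p ≠ τ.symm k := fun e => h (by rw [e]; simp)
      have hu : Function.update (⇑(τ * Equiv.swap p (τ.symm k))) (τ.symm k) k
          = Function.update (⇑τ) p k := by
        funext i
        by_cases h1 : i = τ.symm k
        · subst h1; simp [hne.symm]
        · by_cases h2 : i = p
          · subst h2; simp [h1]
          · simp [h1, h2, Equiv.swap_apply_of_ne_of_ne h2 h1]
      simp only [hu]
      simp [h, Equiv.Perm.sign_swap hne]
  · rintro ⟨τ, p⟩ - hx he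
    simp only [Prod.mk.injEq] at he
    apply hx
    have : τ p = k := by rw [← he.2]; simp
    simp [this]
  · intros; simp
  · rintro ⟨τ, p⟩ -
    have : (τ * Equiv.swap p (τ.symm k)).symm k = p := by
      rw [Equiv.symm_apply_eq]; simp
    simp only [this, Prod.mk.injEq, and_true]
    rw [Equiv.swap_comm (τ.symm k) p, mul_assoc, Equiv.swap_mul_self, mul_one]

end alt
section words
variable {A : Type*} [Ring A] {n : ℕ}

/-- Product of `a` consecutive one-index factors. -/
def P (θ : Fin (n + 1) → A) : ℕ → ℕ → (ℕ → Fin (n + 1)) → A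
  | 0, _, _ => 1
  | a + 1, s, σ => θ (σ s) * P θ a (s + 1) σ

/-- Product of `j` consecutive two-index factors. -/
def Q (Ω : Fin (n + 1) → Fin (n + 1) → A) : ℕ → ℕ → (ℕ → Fin (n + 1)) → A
  | 0, _, _ => 1
  | j + 1, s, σ => Ω (σ s) (σ (s + 1)) * Q Ω j (s + 2) σ

/-- Structure part of the differential of `P`. -/
def LL (θ ph : Fin (n + 1) → A) : ℕ → ℕ → (ℕ → Fin (n + 1)) → A
  | 0, _, _ => 0
  | a + 1, s, σ => ph (σ s) * P θ a (s + 1) σ - θ (σ s) * LL θ ph a (s + 1) σ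

/-- Contracted form of `Q`. -/
def KK (V Ω : Fin (n + 1) → Fin (n + 1) → A) : ℕ → ℕ → (ℕ → Fin (n + 1)) → A
  | 0, _, _ => 0
  | j + 1, s, σ => V (σ s) (σ (s + 1)) * Q Ω j (s + 2) σ
      + Ω (σ s) (σ (s + 1)) * KK V Ω j (s + 2) σ

lemma P_eq (θ : Fin (n + 1) → A) (a : ℕ) : ∀ s σ,
    P θ a s σ = (List.ofFn fun i : Fin a => θ (σ (s + i.1))).prod := by
  induction a with
  | zero => intro s σ; simp [P]
  | succ a ih =>
    intro s σ
    rw [P, ih, List.ofFn_succ, List.prod_cons]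
    simp [add_assoc, add_comm 1]

lemma Q_eq (Ω : Fin (n + 1) → Fin (n + 1) → A) (j : ℕ) : ∀ s σ,
    Q Ω j s σ = (List.ofFn fun t : Fin j => Ω (σ (s + 2 * t.1)) (σ (s + 1 + 2 * t.1))).prod := by
  induction j with
  | zero => intro s σ; simp [Q]
  | succ j ih =>
    intro s σ
    rw [Q, ih, List.ofFn_succ, List.prod_cons]
    have h1 : ∀ t, s + 2 + 2 * t = s + 2 * (t + 1) := by intro t; ring
    have h2 : ∀ t, s + 2 + 1 + 2 * t = s + 1 + 2 * (t + 1) := by intro t; ring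
    simp [h1, h2]

lemma P_congr (θ : Fin (n + 1) → A) (a : ℕ) : ∀ s (σ σ' : ℕ → Fin (n + 1)),
    (∀ i, s ≤ i → σ i = σ' i) → P θ a s σ = P θ a s σ' := by
  induction a with
  | zero => intros; rfl
  | succ a ih =>
    intro s σ σ' h
    rw [P, P, h s le_rfl, ih (s + 1) σ σ' fun i hi => h i (by omega)]

lemma P_congr_lt (θ : Fin (n + 1) → A) (a : ℕ) : ∀ s (σ σ' : ℕ → Fin (n + 1)),
    (∀ i, i < s + a → σ i = σ' i) → P θ a s σ = P θ a s σ' := by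
  induction a with
  | zero => intros; rfl
  | succ a ih =>
    intro s σ σ' h
    rw [P, P, h s (by omega), ih (s + 1) σ σ' fun i hi => h i (by omega)]

lemma Q_congr (Ω : Fin (n + 1) → Fin (n + 1) → A) (j : ℕ) : ∀ s (σ σ' : ℕ → Fin (n + 1)),
    (∀ i, s ≤ i → σ i = σ' i) → Q Ω j s σ = Q Ω j s σ' := by
  induction j with
  | zero => intros; rfl
  | succ j ih =>
    intro s σ σ' h
    rw [Q, Q, h s le_rfl, h (s + 1) (by omega), ih (s + 2) σ σ' fun i hi => h i (by omega)]

lemma swap_ne (σ : ℕ → Fin (n + 1)) (p q i : ℕ) (h1 : i ≠ p) (h2 : i ≠ q) :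
    (σ ∘ Equiv.swap p q) i = σ i := by
  simp [Equiv.swap_apply_of_ne_of_ne h1 h2]

lemma swap_l (σ : ℕ → Fin (n + 1)) (p q : ℕ) : (σ ∘ Equiv.swap p q) p = σ q := by simp
lemma swap_r (σ : ℕ → Fin (n + 1)) (p q : ℕ) : (σ ∘ Equiv.swap p q) q = σ p := by simp

/-- All positions of `ph` among the `θ`s contribute equally. -/
lemma alt_LL (θ ph : Fin (n + 1) → A) (hph : ∀ i x, ph i * x = x * ph i)
    (a : ℕ) : ∀ (s : ℕ) (_ : s + a ≤ n) (X Y : (ℕ → Fin (n + 1)) → A)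
    (_ : ∀ σ σ', (∀ i, i < s → σ i = σ' i) → X σ = X σ')
    (_ : ∀ σ σ', (∀ i, s + a < i → σ i = σ' i) → Y σ = Y σ'),
    Alt (fun σ => X σ * LL θ ph (a + 1) s σ * Y σ)
      = ((a + 1 : ℕ) : A) * Alt (fun σ => X σ * (ph (σ s) * P θ a (s + 1) σ) * Y σ) := by
  induction a with
  | zero => intro s _ X Y _ _; simp [LL]
  | succ a ih =>
    intro s hs X Y hX hY
    have e1 : (fun σ => X σ * LL θ ph (a + 1 + 1) s σ * Y σ) = fun σ =>
        X σ * (ph (σ s) * P θ (a + 1) (s + 1) σ) * Y σ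
          - (X σ * θ (σ s)) * LL θ ph (a + 1) (s + 1) σ * Y σ := by
      funext σ; rw [LL]; noncomm_ring
    rw [e1, alt_sub, ih (s + 1) (by omega) (fun σ => X σ * θ (σ s)) Y]
    · have e2 : Alt (fun σ => X σ * θ (σ s) * (ph (σ (s + 1)) * P θ a (s + 1 + 1) σ) * Y σ)
          = - Alt (fun σ => X σ * (ph (σ s) * P θ (a + 1) (s + 1) σ) * Y σ) := by
        refine alt_swap _ _ s (s + 1) (by omega) (by omega) (by omega) fun σ => ?_
        rw [P, swap_l, swap_r]
        rw [hX (σ ∘ Equiv.swap s (s + 1)) σ fun i hi => swap_ne _ _ _ _ (by omega) (by omega),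
          hY (σ ∘ Equiv.swap s (s + 1)) σ fun i hi => swap_ne _ _ _ _ (by omega) (by omega),
          P_congr θ a (s + 1 + 1) (σ ∘ Equiv.swap s (s + 1)) σ
            fun i hi => swap_ne _ _ _ _ (by omega) (by omega)]
        rw [← mul_assoc (ph _) (θ _), hph]
        noncomm_ring
      rw [e2]; push_cast; noncomm_ring
    · intro σ σ' h; rw [hX σ σ' fun i hi => h i (by omega), h s (by omega)]
    · intro σ σ' h; exact hY σ σ' fun i hi => h i (by omega)

/-- All positions of `V` among the `Ω`s contribute equally. -/
lemma alt_KK (V Ω : Fin (n + 1) → Fin (n + 1) → A) (hΩ : ∀ i j x, Ω i j * x = x * Ω i j)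
    (j : ℕ) : ∀ (s : ℕ) (_ : s + 2 * j + 1 ≤ n) (X : (ℕ → Fin (n + 1)) → A)
    (_ : ∀ σ σ', (∀ i, i < s → σ i = σ' i) → X σ = X σ'),
    Alt (fun σ => X σ * KK V Ω (j + 1) s σ)
      = ((j + 1 : ℕ) : A) * Alt (fun σ => X σ * (V (σ s) (σ (s + 1)) * Q Ω j (s + 2) σ)) := by
  induction j with
  | zero => intro s _ X _; simp [KK]
  | succ j ih =>
    intro s hs X hX
    have e1 : (fun σ => X σ * KK V Ω (j + 1 + 1) s σ) = fun σ =>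
        X σ * (V (σ s) (σ (s + 1)) * Q Ω (j + 1) (s + 2) σ)
          + (X σ * Ω (σ s) (σ (s + 1))) * KK V Ω (j + 1) (s + 2) σ := by
      funext σ; rw [KK]; noncomm_ring
    rw [e1, alt_add, ih (s + 2) (by omega) (fun σ => X σ * Ω (σ s) (σ (s + 1)))]
    · have e2 : Alt (fun σ => X σ * Ω (σ s) (σ (s + 1)) *
            (V (σ (s + 2)) (σ (s + 2 + 1)) * Q Ω j (s + 2 + 2) σ))
          = Alt (fun σ => X σ * (V (σ s) (σ (s + 1)) * Q Ω (j + 1) (s + 2) σ)) := by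
        have e3 : Alt (fun σ => X σ * Ω (σ s) (σ (s + 1)) *
            (V (σ (s + 2)) (σ (s + 2 + 1)) * Q Ω j (s + 2 + 2) σ))
            = - Alt (fun σ => X σ * Ω (σ (s + 2)) (σ (s + 1)) *
            (V (σ s) (σ (s + 2 + 1)) * Q Ω j (s + 2 + 2) σ)) := by
          refine alt_swap _ _ s (s + 2) (by omega) (by omega) (by omega) fun σ => ?_
          rw [swap_l, swap_r, swap_ne _ _ _ (s + 1) (by omega) (by omega),
            swap_ne _ _ _ (s + 2 + 1) (by omega) (by omega),
            hX (σ ∘ Equiv.swap s (s + 2)) σ fun i hi => swap_ne _ _ _ _ (by omega) (by omega),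
            Q_congr Ω j (s + 2 + 2) (σ ∘ Equiv.swap s (s + 2)) σ
              fun i hi => swap_ne _ _ _ _ (by omega) (by omega)]
        rw [e3, neg_eq_iff_eq_neg]
        refine alt_swap _ _ (s + 1) (s + 2 + 1) (by omega) (by omega) (by omega) fun σ => ?_
        rw [Q, swap_l, swap_r, swap_ne _ _ _ s (by omega) (by omega),
          swap_ne _ _ _ (s + 2) (by omega) (by omega),
          hX (σ ∘ Equiv.swap (s + 1) (s + 2 + 1)) σ
            fun i hi => swap_ne _ _ _ _ (by omega) (by omega),
          Q_congr Ω j (s + 2 + 2) (σ ∘ Equiv.swap (s + 1) (s + 2 + 1)) σ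
              fun i hi => swap_ne _ _ _ _ (by omega) (by omega)]
        rw [← mul_assoc (V _ _) (Ω _ _), ← hΩ]
        noncomm_ring
      rw [e2]; push_cast; noncomm_ring
    · intro σ σ' h
      rw [hX σ σ' fun i hi => h i (by omega), h s (by omega), h (s + 1) (by omega)]

/-- Moving two central one-index factors past the `θ`s. -/
lemma alt_move (θ f g : Fin (n + 1) → A) (hf : ∀ i x, f i * x = x * f i)
    (hg : ∀ i x, g i * x = x * g i)
    (a : ℕ) : ∀ (s : ℕ) (_ : s + a + 1 ≤ n) (X Y : (ℕ → Fin (n + 1)) → A)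
    (_ : ∀ σ σ', (∀ i, i < s → σ i = σ' i) → X σ = X σ')
    (_ : ∀ σ σ', (∀ i, s + a + 2 ≤ i → σ i = σ' i) → Y σ = Y σ'),
    Alt (fun σ => X σ * P θ a s σ * (f (σ (s + a)) * g (σ (s + a + 1))) * Y σ)
      = Alt (fun σ => X σ * (f (σ s) * g (σ (s + 1))) * P θ a (s + 2) σ * Y σ) := by
  induction a with
  | zero => intro s _ X Y _ _; simp [P]
  | succ a ih =>
    intro s hs X Y hX hY
    have e1 : (fun σ => X σ * P θ (a + 1) s σ * (f (σ (s + (a + 1))) * g (σ (s + (a + 1) + 1))) * Y σ)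
        = fun σ => (X σ * θ (σ s)) * P θ a (s + 1) σ *
          (f (σ (s + 1 + a)) * g (σ (s + 1 + a + 1))) * Y σ := by
      funext σ
      rw [P, show s + (a + 1) = s + 1 + a by omega]; noncomm_ring
    rw [e1, ih (s + 1) (by omega) (fun σ => X σ * θ (σ s)) Y]
    · have e3 : Alt (fun σ => X σ * θ (σ s) * (f (σ (s + 1)) * g (σ (s + 1 + 1))) *
            P θ a (s + 1 + 2) σ * Y σ)
          = - Alt (fun σ => X σ * θ (σ (s + 1)) * (f (σ s) * g (σ (s + 1 + 1))) *
            P θ a (s + 1 + 2) σ * Y σ) := by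
        refine alt_swap _ _ s (s + 1) (by omega) (by omega) (by omega) fun σ => ?_
        rw [swap_l, swap_r, swap_ne _ _ _ (s + 1 + 1) (by omega) (by omega),
          hX (σ ∘ Equiv.swap s (s + 1)) σ fun i hi => swap_ne _ _ _ _ (by omega) (by omega),
          hY (σ ∘ Equiv.swap s (s + 1)) σ fun i hi => swap_ne _ _ _ _ (by omega) (by omega),
          P_congr θ a (s + 1 + 2) (σ ∘ Equiv.swap s (s + 1)) σ
              fun i hi => swap_ne _ _ _ _ (by omega) (by omega)]
      rw [e3, neg_eq_iff_eq_neg]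
      refine alt_swap _ _ (s + 1) (s + 1 + 1) (by omega) (by omega) (by omega) fun σ => ?_
      rw [P, swap_l, swap_ne _ _ _ s (by omega) (by omega), show s + 2 = s + 1 + 1 from rfl, swap_r,
        hX (σ ∘ Equiv.swap (s + 1) (s + 1 + 1)) σ
          fun i hi => swap_ne _ _ _ _ (by omega) (by omega),
        hY (σ ∘ Equiv.swap (s + 1) (s + 1 + 1)) σ
          fun i hi => swap_ne _ _ _ _ (by omega) (by omega),
        P_congr θ a _ (σ ∘ Equiv.swap (s + 1) (s + 1 + 1)) σ
              fun i hi => swap_ne _ _ _ _ (by omega) (by omega)]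
      rw [← mul_assoc (X σ * (f _ * g _)), mul_assoc (X σ) (f _ * g _) (θ _), mul_assoc (f _),
        hg, ← mul_assoc (f _), hf]
      noncomm_ring
    · intro σ σ' h; rw [hX σ σ' fun i hi => h i (by omega), h s (by omega)]
    · intro σ σ' h; exact hY σ σ' fun i hi => h i (by omega)

/-- Contraction of `P` with `u` vanishes. -/
lemma contr_P (θ u : Fin (n + 1) → A) (hu : ∀ i x, u i * x = x * u i)
    (huθ : ∑ k, u k * θ k = 0) (a : ℕ) : ∀ (s : ℕ) (σ : ℕ → Fin (n + 1)) (p : ℕ)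
    (_ : s ≤ p) (_ : p < s + a), ∑ k, u k * P θ a s (Function.update σ p k) = 0 := by
  induction a with
  | zero => intros; omega
  | succ a ih =>
    intro s σ p h1 h2
    by_cases h : p = s
    · subst h
      have : ∀ k, u k * P θ (a + 1) p (Function.update σ p k)
          = u k * θ k * P θ a (p + 1) σ := by
        intro k
        rw [P, Function.update_self, P_congr θ a (p + 1) (Function.update σ p k) σ
          fun i hi => Function.update_of_ne (by omega) _ _, mul_assoc]
      simp only [this]
      rw [← Finset.sum_mul, huθ, zero_mul]
    · have : ∀ k, u k * P θ (a + 1) s (Function.update σ p k)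
          = θ (σ s) * (u k * P θ a (s + 1) (Function.update σ p k)) := by
        intro k
        rw [P, Function.update_of_ne (Ne.symm h), ← mul_assoc, hu, mul_assoc]
      simp only [this]
      rw [← Finset.mul_sum, ih (s + 1) σ p (by omega) (by omega), mul_zero]

/-- Contraction of `Q` with `u`. -/
lemma contr_Q (u ph : Fin (n + 1) → A) (Ω : Fin (n + 1) → Fin (n + 1) → A)
    (hu : ∀ i x, u i * x = x * u i) (hΩ : ∀ i j x, Ω i j * x = x * Ω i j)
    (hskew : ∀ i j, Ω i j = - Ω j i) (hph : ∀ i, ph i = ∑ k, Ω i k * u k)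
    (j : ℕ) : ∀ (s : ℕ) (σ : ℕ → Fin (n + 1)),
    ∑ p ∈ Finset.Ico s (s + 2 * j), u (σ p) * ∑ k, u k * Q Ω j s (Function.update σ p k)
      = KK (fun a b => u b * ph a - u a * ph b) Ω j s σ := by
  induction j with
  | zero => intro s σ; simp [KK]
  | succ j ih =>
    intro s σ
    rw [Finset.sum_eq_sum_Ico_succ_bot (by omega), Finset.sum_eq_sum_Ico_succ_bot (by omega), KK,
      ← ih (s + 2) σ, show s + 2 * (j + 1) = s + 2 + 2 * j by ring, ← add_assoc]
    congr 1
    · have h1 : ∀ k, u k * Q Ω (j + 1) s (Function.update σ s k)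
          = - (Ω (σ (s + 1)) k * u k * Q Ω j (s + 2) σ) := by
        intro k
        rw [Q, Function.update_self, Function.update_of_ne (by omega),
          Q_congr Ω j (s + 2) (Function.update σ s k) σ
          fun i hi => Function.update_of_ne (by omega) _ _, ← mul_assoc, hu, hskew]
        noncomm_ring
      have h2 : ∀ k, u k * Q Ω (j + 1) s (Function.update σ (s + 1) k)
          = (Ω (σ s) k * u k * Q Ω j (s + 2) σ) := by
        intro k
        rw [Q, Function.update_self, Function.update_of_ne (by omega),
          Q_congr Ω j (s + 2) (Function.update σ (s + 1) k) σ
          fun i hi => Function.update_of_ne (by omega) _ _, ← mul_assoc, hu]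
      simp only [h1, h2]
      rw [Finset.sum_neg_distrib, ← Finset.sum_mul, ← Finset.sum_mul, ← hph, ← hph]
      noncomm_ring
    · rw [Finset.mul_sum]
      refine Finset.sum_congr (by congr 1) fun p hp => ?_
      rw [Finset.mem_Ico] at hp
      have : ∀ k, u k * Q Ω (j + 1) s (Function.update σ p k)
          = Ω (σ s) (σ (s + 1)) * (u k * Q Ω j (s + 2) (Function.update σ p k)) := by
        intro k
        rw [Q, Function.update_of_ne (by omega), Function.update_of_ne (by omega),
          ← mul_assoc, hu, mul_assoc]
      simp only [this]
      rw [← Finset.mul_sum, ← mul_assoc, hu, mul_assoc]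

/-- Contraction of the full word. -/
lemma alt_contr (u θ ph : Fin (n + 1) → A) (Ω : Fin (n + 1) → Fin (n + 1) → A)
    (hu : ∀ i x, u i * x = x * u i) (hΩ : ∀ i j x, Ω i j * x = x * Ω i j)
    (hskew : ∀ i j, Ω i j = - Ω j i) (hph : ∀ i, ph i = ∑ k, Ω i k * u k)
    (huθ : ∑ k, u k * θ k = 0) (hunit : (∑ i, u i * u i) = 1)
    (a j : ℕ) (haj : a + 2 * j = n + 1) :
    Alt (fun σ => P θ a 0 σ * Q Ω j a σ)
      = Alt (fun σ => P θ a 0 σ * KK (fun a b => u b * ph a - u a * ph b) Ω j a σ) := by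
  have h1 : Alt (fun σ => P θ a 0 σ * Q Ω j a σ)
      = ∑ k, u k * (u k * Alt (fun σ => P θ a 0 σ * Q Ω j a σ)) := by
    simp only [← mul_assoc]
    rw [← Finset.sum_mul, hunit, one_mul]
  rw [h1]
  have h2 := fun k => (alt_exchange u k (fun σ => P θ a 0 σ * Q Ω j a σ)).symm
  simp only [h2]
  simp only [← alt_mul_left]
  rw [← alt_sum]
  congr 1
  funext σ
  simp only [Finset.mul_sum]
  rw [Finset.sum_comm, Finset.range_eq_Ico, ← Finset.sum_Ico_consecutive _ (Nat.zero_le a) (by omega : a ≤ n + 1)]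
  rw [← contr_Q u ph Ω hu hΩ hskew hph, haj, Finset.sum_eq_zero, zero_add, Finset.mul_sum]
  · refine Finset.sum_congr rfl fun p hp => ?_
    rw [Finset.mem_Ico] at hp
    rw [Finset.mul_sum, Finset.mul_sum]
    refine Finset.sum_congr rfl fun k _ => ?_
    rw [P_congr_lt θ a 0 (Function.update σ p k) σ
          fun i hi => Function.update_of_ne (by omega) _ _,
      ← mul_assoc (P θ a 0 σ) (u (σ p)), ← hu (σ p) (P θ a 0 σ), mul_assoc (u (σ p)),
      ← mul_assoc (P θ a 0 σ) (u k), ← hu k (P θ a 0 σ), mul_assoc (u k) (P θ a 0 σ),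
      ← mul_assoc, ← mul_assoc (u (σ p)) (u k), hu k (u (σ p))]
  · intro p hp
    rw [Finset.mem_Ico] at hp
    have : ∀ k, u k * (u (σ p) * (P θ a 0 (Function.update σ p k) * Q Ω j a (Function.update σ p k)))
        = u (σ p) * (u k * P θ a 0 (Function.update σ p k)) * Q Ω j a σ := by
      intro k
      rw [Q_congr Ω j a (Function.update σ p k) σ
          fun i hi => Function.update_of_ne (by omega) _ _, ← mul_assoc, hu k]
      noncomm_ring
    simp only [this]
    rw [← Finset.sum_mul, ← Finset.mul_sum, contr_P θ u hu huθ a 0 σ p (by omega) (by omega)]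
    simp

end words
section main
variable {A : Type*} [Ring A] {n : ℕ}

lemma alt_A_succ (u θ ph : Fin (n + 1) → A) (Ω : Fin (n + 1) → Fin (n + 1) → A)
    (hu : ∀ i x, u i * x = x * u i) (hΩ : ∀ i j x, Ω i j * x = x * Ω i j)
    (hskew : ∀ i j, Ω i j = - Ω j i) (hph : ∀ i, ph i = ∑ k, Ω i k * u k)
    (hphc : ∀ i x, ph i * x = x * ph i)
    (huθ : ∑ k, u k * θ k = 0) (hunit : (∑ i, u i * u i) = 1)
    (a j : ℕ) (haj : a + 2 * (j + 1) = n + 1) :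
    Alt (fun σ => P θ a 0 σ * Q Ω (j + 1) a σ)
      = - ((2 * (j + 1) : ℕ) : A) *
        Alt (fun σ => u (σ 0) * ph (σ 1) * P θ a 2 σ * Q Ω j (a + 2) σ) := by
  rw [alt_contr u θ ph Ω hu hΩ hskew hph huθ hunit a (j + 1) haj,
    alt_KK _ Ω hΩ j a (by omega) _ (fun σ σ' h => P_congr_lt θ a 0 σ σ' (by simpa using h))]
  have e0 : (fun σ : ℕ → Fin (n + 1) => P θ a 0 σ * ((u (σ (a + 1)) * ph (σ a) - u (σ a) * ph (σ (a + 1))) *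
      Q Ω j (a + 2) σ)) = fun σ => P θ a 0 σ * (u (σ (a + 1)) * ph (σ a)) * Q Ω j (a + 2) σ
        - P θ a 0 σ * (u (σ a) * ph (σ (a + 1))) * Q Ω j (a + 2) σ := by
    funext σ; noncomm_ring
  have e1 : Alt (fun σ => P θ a 0 σ * (u (σ (a + 1)) * ph (σ a)) * Q Ω j (a + 2) σ)
      = - Alt (fun σ => P θ a 0 σ * (u (σ a) * ph (σ (a + 1))) * Q Ω j (a + 2) σ) := by
    refine alt_swap _ _ a (a + 1) (by omega) (by omega) (by omega) fun σ => ?_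
    rw [swap_l, swap_r, P_congr_lt θ a 0 (σ ∘ Equiv.swap a (a + 1)) σ
        fun i hi => swap_ne _ _ _ _ (by omega) (by omega),
      Q_congr Ω j (a + 2) (σ ∘ Equiv.swap a (a + 1)) σ
        fun i hi => swap_ne _ _ _ _ (by omega) (by omega)]
  have e2 := alt_move θ u ph hu hphc a 0 (by omega) (fun _ => 1) (fun σ => Q Ω j (a + 2) σ)
    (fun _ _ _ => rfl) (fun σ σ' h => Q_congr Ω j (a + 2) σ σ' fun i hi => h i (by omega))
  simp only [one_mul, zero_add] at e2
  rw [e0, alt_sub, e1, e2]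
  push_cast
  noncomm_ring

variable [Algebra ℝ A]

lemma d_alt (d : A →ₗ[ℝ] A) (T : (ℕ → Fin (n + 1)) → A) :
    d (Alt T) = Alt (fun σ => d (T σ)) := by
  simp only [Alt, map_sum, map_zsmul]

lemma dQ (d : A →ₗ[ℝ] A) (ω Ω : Fin (n + 1) → Fin (n + 1) → A)
    (hΩ : ∀ i j x, Ω i j * x = x * Ω i j) (h1 : d 1 = 0)
    (dΩ : ∀ i j, d (Ω i j) = - ∑ k, ω i k * Ω k j - ∑ k, ω j k * Ω i k)
    (hdΩ : ∀ i j x, d (Ω i j * x) = d (Ω i j) * x + Ω i j * d x) (j : ℕ) :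
    ∀ (s : ℕ) (σ : ℕ → Fin (n + 1)), d (Q Ω j s σ)
      = - ∑ p ∈ Finset.Ico s (s + 2 * j), ∑ k, ω (σ p) k * Q Ω j s (Function.update σ p k) := by
  induction j with
  | zero => intro s σ; simp [Q, h1]
  | succ j ih =>
    intro s σ
    rw [Finset.sum_eq_sum_Ico_succ_bot (by omega), Finset.sum_eq_sum_Ico_succ_bot (by omega),
      Q, hdΩ, ih, dΩ, show s + 2 * (j + 1) = s + 2 + 2 * j by ring]
    have e1 : ∀ k, ω (σ s) k * Q Ω (j + 1) s (Function.update σ s k)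
        = ω (σ s) k * Ω k (σ (s + 1)) * Q Ω j (s + 2) σ := by
      intro k
      rw [Q, Function.update_self, Function.update_of_ne (by omega),
          Q_congr Ω j (s + 2) (Function.update σ s k) σ
          fun i hi => Function.update_of_ne (by omega) _ _, mul_assoc]
    have e2 : ∀ k, ω (σ (s + 1)) k * Q Ω (j + 1) s (Function.update σ (s + 1) k)
        = ω (σ (s + 1)) k * Ω (σ s) k * Q Ω j (s + 2) σ := by
      intro k
      rw [Q, Function.update_self, Function.update_of_ne (by omega),
          Q_congr Ω j (s + 2) (Function.update σ (s + 1) k) σ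
          fun i hi => Function.update_of_ne (by omega) _ _, mul_assoc]
    have e3 : ∑ p ∈ Finset.Ico (s + 1 + 1) (s + 2 + 2 * j),
          ∑ k, ω (σ p) k * Q Ω (j + 1) s (Function.update σ p k)
        = Ω (σ s) (σ (s + 1)) * ∑ p ∈ Finset.Ico (s + 2) (s + 2 + 2 * j),
          ∑ k, ω (σ p) k * Q Ω j (s + 2) (Function.update σ p k) := by
      rw [Finset.mul_sum]
      refine Finset.sum_congr rfl fun p hp => ?_
      rw [Finset.mem_Ico] at hp
      rw [Finset.mul_sum]
      refine Finset.sum_congr rfl fun k _ => ?_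
      rw [Q, Function.update_of_ne (by omega), Function.update_of_ne (by omega),
          ← mul_assoc, ← mul_assoc, hΩ]
    simp only [e1, e2, e3, ← Finset.sum_mul]
    noncomm_ring

lemma dPQ (d : A →ₗ[ℝ] A) (θ ph : Fin (n + 1) → A) (ω Ω : Fin (n + 1) → Fin (n + 1) → A)
    (hθω : ∀ i j k, θ i * ω j k = -(ω j k * θ i))
    (dθ : ∀ i, d (θ i) = ph i - ∑ k, ω i k * θ k)
    (hdθ : ∀ i x, d (θ i * x) = d (θ i) * x - θ i * d x)
    (hΩ : ∀ i j x, Ω i j * x = x * Ω i j) (h1 : d 1 = 0)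
    (dΩ : ∀ i j, d (Ω i j) = - ∑ k, ω i k * Ω k j - ∑ k, ω j k * Ω i k)
    (hdΩ : ∀ i j x, d (Ω i j * x) = d (Ω i j) * x + Ω i j * d x) (j : ℕ) (a : ℕ) :
    ∀ (s : ℕ) (σ : ℕ → Fin (n + 1)), d (P θ a s σ * Q Ω j (s + a) σ)
      = LL θ ph a s σ * Q Ω j (s + a) σ - ∑ p ∈ Finset.Ico s (s + a + 2 * j), ∑ k, ω (σ p) k *
        (P θ a s (Function.update σ p k) * Q Ω j (s + a) (Function.update σ p k)) := by
  induction a with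
  | zero => intro s σ; simp [P, LL, dQ d ω Ω hΩ h1 dΩ hdΩ j]
  | succ a ih =>
    intro s σ
    rw [Finset.sum_eq_sum_Ico_succ_bot (by omega), P, mul_assoc, hdθ, dθ,
      show s + (a + 1) = s + 1 + a by ring, ih, LL]
    have e1 : ∀ k, ω (σ s) k * (P θ (a + 1) s (Function.update σ s k) *
          Q Ω j (s + 1 + a) (Function.update σ s k))
        = ω (σ s) k * θ k * (P θ a (s + 1) σ * Q Ω j (s + 1 + a) σ) := by
      intro k
      rw [P, Function.update_self,
          P_congr θ a (s + 1) (Function.update σ s k) σ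
          fun i hi => Function.update_of_ne (by omega) _ _,
          Q_congr Ω j (s + 1 + a) (Function.update σ s k) σ
          fun i hi => Function.update_of_ne (by omega) _ _]
      noncomm_ring
    have e3 : ∑ p ∈ Finset.Ico (s + 1) (s + 1 + a + 2 * j),
          ∑ k, ω (σ p) k * (P θ (a + 1) s (Function.update σ p k) *
          Q Ω j (s + 1 + a) (Function.update σ p k))
        = - (θ (σ s) * ∑ p ∈ Finset.Ico (s + 1) (s + 1 + a + 2 * j),
          ∑ k, ω (σ p) k * (P θ a (s + 1) (Function.update σ p k) *
          Q Ω j (s + 1 + a) (Function.update σ p k))) := by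
      rw [Finset.mul_sum, ← Finset.sum_neg_distrib]
      refine Finset.sum_congr rfl fun p hp => ?_
      rw [Finset.mem_Ico] at hp
      rw [Finset.mul_sum, ← Finset.sum_neg_distrib]
      refine Finset.sum_congr rfl fun k _ => ?_
      rw [P, Function.update_of_ne (by omega), ← mul_assoc (θ (σ s)) (ω _ _), hθω]
      noncomm_ring
    simp only [e1, e3, ← Finset.sum_mul]
    noncomm_ring

/-- The differential of `Ψ_j`. -/
lemma d_alt_word (d : A →ₗ[ℝ] A) (u θ ph : Fin (n + 1) → A) (ω Ω : Fin (n + 1) → Fin (n + 1) → A)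
    (hu : ∀ i x, u i * x = x * u i) (hω0 : ∀ i, ω i i = 0)
    (du : ∀ i, d (u i) = θ i - ∑ k, ω i k * u k)
    (hdu : ∀ i x, d (u i * x) = d (u i) * x + u i * d x)
    (hθω : ∀ i j k, θ i * ω j k = -(ω j k * θ i))
    (dθ : ∀ i, d (θ i) = ph i - ∑ k, ω i k * θ k)
    (hdθ : ∀ i x, d (θ i * x) = d (θ i) * x - θ i * d x)
    (hΩ : ∀ i j x, Ω i j * x = x * Ω i j) (h1 : d 1 = 0)
    (dΩ : ∀ i j, d (Ω i j) = - ∑ k, ω i k * Ω k j - ∑ k, ω j k * Ω i k)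
    (hdΩ : ∀ i j x, d (Ω i j * x) = d (Ω i j) * x + Ω i j * d x) (j : ℕ) (a : ℕ)
    (haj : a + 2 * j = n) :
    d (Alt (fun σ => u (σ 0) * P θ a 1 σ * Q Ω j (1 + a) σ))
      = Alt (fun σ => P θ (a + 1) 0 σ * Q Ω j (a + 1) σ)
        + Alt (fun σ => u (σ 0) * LL θ ph a 1 σ * Q Ω j (1 + a) σ) := by
  have key : ∀ σ : ℕ → Fin (n + 1), d (u (σ 0) * P θ a 1 σ * Q Ω j (1 + a) σ)
      = P θ (a + 1) 0 σ * Q Ω j (a + 1) σ + u (σ 0) * LL θ ph a 1 σ * Q Ω j (1 + a) σ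
        - ∑ k, ∑ p ∈ Finset.range (n + 1), ω (σ p) k *
          (fun σ : ℕ → Fin (n + 1) => u (σ 0) * P θ a 1 σ * Q Ω j (1 + a) σ)
            (Function.update σ p k) := by
    intro σ
    rw [Finset.sum_comm, Finset.range_eq_Ico, Finset.sum_eq_sum_Ico_succ_bot (by omega),
      mul_assoc, hdu, du, dPQ d θ ph ω Ω hθω dθ hdθ hΩ h1 dΩ hdΩ, P, zero_add,
      show 1 + a + 2 * j = n + 1 by omega, show a + 1 = 1 + a by omega]
    have e1 : ∀ k, ω (σ 0) k * (u ((Function.update σ 0 k) 0) * P θ a 1 (Function.update σ 0 k) *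
          Q Ω j (1 + a) (Function.update σ 0 k))
        = ω (σ 0) k * u k * (P θ a 1 σ * Q Ω j (1 + a) σ) := by
      intro k
      rw [Function.update_self,
          P_congr θ a 1 (Function.update σ 0 k) σ
          fun i hi => Function.update_of_ne (by omega) _ _,
          Q_congr Ω j (1 + a) (Function.update σ 0 k) σ
          fun i hi => Function.update_of_ne (by omega) _ _]
      noncomm_ring
    have e3 : ∑ p ∈ Finset.Ico 1 (n + 1),
          ∑ k, ω (σ p) k * (u ((Function.update σ p k) 0) * P θ a 1 (Function.update σ p k) *
          Q Ω j (1 + a) (Function.update σ p k))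
        = u (σ 0) * ∑ p ∈ Finset.Ico 1 (n + 1),
          ∑ k, ω (σ p) k * (P θ a 1 (Function.update σ p k) *
          Q Ω j (1 + a) (Function.update σ p k)) := by
      rw [Finset.mul_sum]
      refine Finset.sum_congr rfl fun p hp => ?_
      rw [Finset.mem_Ico] at hp
      rw [Finset.mul_sum]
      refine Finset.sum_congr rfl fun k _ => ?_
      rw [Function.update_of_ne (by omega), ← mul_assoc (u (σ 0)) (ω _ _), hu (σ 0) (ω _ _)]
      noncomm_ring
    simp only [e1, e3, ← Finset.sum_mul]
    noncomm_ring
  rw [d_alt]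
  simp only [key]
  rw [alt_sub, alt_add, alt_sum, sub_eq_self]
  refine Finset.sum_eq_zero fun k _ => ?_
  have := alt_exchange (fun i => ω i k) k
    (fun σ : ℕ → Fin (n + 1) => u (σ 0) * P θ a 1 σ * Q Ω j (1 + a) σ)
  rw [hω0, zero_mul] at this
  exact this

lemma psiJ_eq (u θ : Fin (n + 1) → A) (Ω : Fin (n + 1) → Fin (n + 1) → A)
    (j : ℕ) (hj : 2 * j ≤ n) :
    psiJ n u θ Ω j hj
      = Alt (fun σ => u (σ 0) * P θ (n - 2 * j) 1 σ * Q Ω j (1 + (n - 2 * j)) σ) := by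
  unfold psiJ Alt
  refine Finset.sum_congr rfl fun τ _ => ?_
  simp only [P_eq, Q_eq]
  congr 2
  · congr 2
    · congr 1
      funext i
      rw [ext_of_lt _ (by have := i.isLt; omega)]
      congr 2; simp [add_comm]
  · congr 2
    funext t
    rw [ext_of_lt _ (by have := t.isLt; omega), ext_of_lt _ (by have := t.isLt; omega)]
    congr 3 <;> simp <;> omega

lemma euler_eq (Ω : Fin (n + 1) → Fin (n + 1) → A) (hn : Odd n) :
    eulerCurvatureForm n Ω = ((4 * Real.pi) ^ (n / 2 + 1) * ((n / 2 + 1).factorial : ℝ))⁻¹ •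
      Alt (fun σ => Q Ω (n / 2 + 1) 0 σ) := by
  have h : (n + 1) / 2 = n / 2 + 1 := by obtain ⟨m, rfl⟩ := hn; omega
  unfold eulerCurvatureForm Alt
  congr 1
  refine Finset.sum_congr rfl fun τ _ => ?_
  simp only [← h, Q_eq]
  congr 3
  funext t
  rw [ext_of_lt _ (by have := t.isLt; omega), ext_of_lt _ (by have := t.isLt; omega)]
  congr 3 <;> simp <;> omega

lemma doubleFact_aux (k : ℕ) (h : 1 ≤ k) : ((k‼ : ℕ) : ℝ) = k * ((k - 2)‼ : ℕ) := by
  rcases k with _ | _ | k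
  · omega
  · simp
  · rw [Nat.doubleFactorial_add_two]; push_cast; ring

end main
section final
variable {A : Type*} [Ring A] [Algebra ℝ A]

lemma self_eq_neg_aux {x : A} (h : x = -x) : x = 0 := by
  have h2 : (2 : ℝ) • x = 0 := by
    rw [two_smul]; nth_rewrite 2 [h]; simp
  have := congrArg (fun y => (2 : ℝ)⁻¹ • y) h2
  simpa [smul_smul] using this

lemma cast_mul_aux (k : ℕ) (x : A) : (k : A) * x = (k : ℝ) • x := by
  rw [Algebra.smul_def, map_natCast]

lemma main_aux (d : A →ₗ[ℝ] A) (n : ℕ) (u θ ph : Fin (n + 1) → A)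
    (ω Ω : Fin (n + 1) → Fin (n + 1) → A)
    (hu : ∀ i x, u i * x = x * u i) (hω0 : ∀ i, ω i i = 0)
    (du : ∀ i, d (u i) = θ i - ∑ k, ω i k * u k)
    (hdu : ∀ i x, d (u i * x) = d (u i) * x + u i * d x)
    (hθω : ∀ i j k, θ i * ω j k = -(ω j k * θ i))
    (dθ : ∀ i, d (θ i) = ph i - ∑ k, ω i k * θ k)
    (hdθ : ∀ i x, d (θ i * x) = d (θ i) * x - θ i * d x)
    (hΩ : ∀ i j x, Ω i j * x = x * Ω i j) (h1 : d 1 = 0)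
    (dΩ : ∀ i j, d (Ω i j) = - ∑ k, ω i k * Ω k j - ∑ k, ω j k * Ω i k)
    (hdΩ : ∀ i j x, d (Ω i j * x) = d (Ω i j) * x + Ω i j * d x)
    (hskew : ∀ i j, Ω i j = - Ω j i) (hph : ∀ i, ph i = ∑ k, Ω i k * u k)
    (hphc : ∀ i x, ph i * x = x * ph i)
    (huθ : ∑ k, u k * θ k = 0) (hunit : (∑ i, u i * u i) = 1) :
    (Even n → d (psiForm n u θ Ω) = 0) ∧
      (Odd n → d (psiForm n u θ Ω) = -eulerCurvatureForm n Ω) := by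
  set W : ℕ → A := fun j => Alt (fun σ => u (σ 0) * ph (σ 1) * P θ (n - 1 - 2 * j) 2 σ *
    Q Ω j (n + 1 - 2 * j) σ) with hW
  set AA : ℕ → A := fun j => Alt (fun σ => P θ (n + 1 - 2 * j) 0 σ *
    Q Ω j (n + 1 - 2 * j) σ) with hAA
  set c : ℕ → ℝ := fun j => ((2 ^ j * j.factorial * (n - 2 * j)‼ : ℝ))⁻¹ with hc
  have hA0 : AA 0 = 0 := by
    have := alt_contr u θ ph Ω hu hΩ hskew hph huθ hunit (n + 1) 0 (by omega)
    simp only [KK, mul_zero, alt_zero] at this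
    exact this
  have hAs : ∀ j, 2 * j + 1 ≤ n → AA (j + 1) = - ((2 * (j + 1) : ℝ) • W j) := by
    intro j hj
    have := alt_A_succ u θ ph Ω hu hΩ hskew hph hphc huθ hunit (n - 1 - 2 * j) j (by omega)
    rw [neg_mul, cast_mul_aux] at this
    simp only [hAA, hW]
    rw [show n + 1 - 2 * (j + 1) = n - 1 - 2 * j by omega, this,
      show n - 1 - 2 * j + 2 = n + 1 - 2 * j by omega]
    push_cast
    rfl
  have hpsi : ∀ j (hj : 2 * j ≤ n), d (psiJ n u θ Ω j hj)
      = AA j + ((n - 2 * j : ℕ) : ℝ) • W j := by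
    intro j hj
    rw [psiJ_eq, d_alt_word d u θ ph ω Ω hu hω0 du hdu hθω dθ hdθ hΩ h1 dΩ hdΩ j (n - 2 * j)
      (by omega)]
    congr 1
    · simp only [hAA]
      rw [show n + 1 - 2 * j = n - 2 * j + 1 by omega]
    · by_cases h : n = 2 * j
      · have : n - 2 * j = 0 := by omega
        simp [this, LL, alt_zero]
      · obtain ⟨a, ha⟩ : ∃ a, n - 2 * j = a + 1 := ⟨n - 2 * j - 1, by omega⟩
        rw [ha, alt_LL θ ph hphc a 1 (by omega) (fun σ => u (σ 0))
          (fun σ => Q Ω j (1 + (a + 1)) σ) (fun σ σ' h => by rw [h 0 (by omega)])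
          (fun σ σ' h => Q_congr Ω j _ σ σ' fun i hi => h i (by omega)), cast_mul_aux]
        simp only [hW]
        rw [show n - 1 - 2 * j = a by omega, show n + 1 - 2 * j = 1 + (a + 1) by omega]
        simp only [mul_assoc]
  have hcs : ∀ j, 2 * j + 2 ≤ n → c j * ((n - 2 * j : ℕ) : ℝ) = c (j + 1) * (2 * (j + 1)) := by
    intro j hj
    simp only [hc]
    rw [doubleFact_aux (n - 2 * j) (by omega), show n - 2 * (j + 1) = n - 2 * j - 2 by omega,
      Nat.factorial_succ, pow_succ]
    have x1 : ((n - 2 * j : ℕ) : ℝ) ≠ 0 := by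
      have : n - 2 * j ≠ 0 := by omega
      exact_mod_cast this
    have x2 : (((n - 2 * j - 2)‼ : ℕ) : ℝ) ≠ 0 := by
      exact_mod_cast (Nat.doubleFactorial_pos _).ne'
    have x3 : ((j.factorial : ℕ) : ℝ) ≠ 0 := by exact_mod_cast j.factorial_ne_zero
    have x4 : ((j : ℝ) + 1) ≠ 0 := by positivity
    push_cast
    field_simp
  have tel : ∀ M, 2 * M ≤ n → ∑ j ∈ Finset.range (M + 1),
      c j • (AA j + ((n - 2 * j : ℕ) : ℝ) • W j) = (c M * ((n - 2 * M : ℕ) : ℝ)) • W M := by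
    intro M
    induction M with
    | zero => intro _; simp [hA0, smul_smul]
    | succ M ih =>
      intro hM
      rw [Finset.sum_range_succ, ih (by omega), hcs M (by omega), hAs M (by omega), smul_add,
        smul_neg, smul_smul, smul_smul]
      abel
  have tot : d (psiForm n u θ Ω) = (((n - 1)‼ : ℝ) * sphereVolume n)⁻¹ •
      (c (n / 2) * ((n - 2 * (n / 2) : ℕ) : ℝ)) • W (n / 2) := by
    rw [← tel (n / 2) (by omega), Finset.sum_range, psiForm, map_smul, map_sum]
    congr 1
    refine Finset.sum_congr rfl fun j _ => ?_
    rw [map_smul, hpsi]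
  refine ⟨fun hn => ?_, fun hn => ?_⟩
  · rw [tot]
    have : n - 2 * (n / 2) = 0 := by obtain ⟨m, rfl⟩ := hn; omega
    simp [this]
  · rw [tot, euler_eq Ω hn]
    have hne : ¬ Even n := by simpa using hn
    obtain ⟨m, hm⟩ := hn
    have hm2 : n / 2 = m := by omega
    have e : Alt (fun σ => Q Ω (m + 1) 0 σ) = AA (m + 1) := by
      simp only [hAA]
      rw [show n + 1 - 2 * (m + 1) = 0 by omega]
      simp [P]
    rw [hm2, e, hAs m (by omega), smul_neg, neg_neg, smul_smul, smul_smul]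
    congr 1
    have hk : n - 2 * m = 1 := by omega
    simp only [hc, sphereVolume, if_neg hne, hk, hm2]
    have x2 : (((n - 1)‼ : ℕ) : ℝ) ≠ 0 := by
      exact_mod_cast (Nat.doubleFactorial_pos _).ne'
    have x3 : ((m.factorial : ℕ) : ℝ) ≠ 0 := by exact_mod_cast m.factorial_ne_zero
    have x4 : ((m : ℝ) + 1) ≠ 0 := by positivity
    have hpi := Real.pi_ne_zero
    rw [mul_div_cancel₀ _ x2, Nat.factorial_succ,
      show (4 * Real.pi) = 2 * (2 * Real.pi) by ring, mul_pow 2 (2 * Real.pi)]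
    push_cast
    rw [show (1‼ : ℕ) = 1 from rfl]
    field_simp
    push_cast
    ring

end final
end ChernPf

open ChernPf in
theorem dPsi_eq_zero_or_neg_euler_form
    {A : Type*} [Ring A] [Algebra ℝ A]
    -- the exterior differential
    (d : A →ₗ[ℝ] A)
    (n : ℕ)
    -- the tautological coordinates, the forms `θ`, the connection and
    -- curvature forms, with respect to a local oriented orthonormal frame
    (u θ : Fin (n + 1) → A) (ω Ω : Fin (n + 1) → Fin (n + 1) → A)
    -- `θ = du + ωu`
    (hθ : ∀ i, θ i = d (u i) + ∑ j, ω i j * u j)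
    -- `Ω = dω + ω ∧ ω`
    (hΩ : ∀ i j, Ω i j = d (ω i j) + ∑ k, ω i k * ω k j)
    -- the connection is an `SO(n+1)`-connection
    (hskew : ∀ i j, ω i j = -ω j i)
    -- the unit sphere bundle: `Σᵢ uᵢ² = 1`
    (hunit : (∑ i, u i * u i) = 1)
    -- graded commutation rules: `u` has degree 0, `Ω` degree 2 (both
    -- central), `θ` and `ω` degree 1 (they anticommute)
    (hu_comm : ∀ i x, u i * x = x * u i)
    (hΩ_comm : ∀ i j x, Ω i j * x = x * Ω i j)
    (hθθ : ∀ i j, θ i * θ j = -(θ j * θ i))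
    (hθω : ∀ i j k, θ i * ω j k = -(ω j k * θ i))
    (hωω : ∀ i j k l, ω i j * ω k l = -(ω k l * ω i j))
    -- `d ∘ d = 0` and the graded Leibniz rule
    (hdd : ∀ x, d (d x) = 0)
    (hdu : ∀ i x, d (u i * x) = d (u i) * x + u i * d x)
    (hdθ : ∀ i x, d (θ i * x) = d (θ i) * x - θ i * d x)
    (hdω : ∀ i j x, d (ω i j * x) = d (ω i j) * x - ω i j * d x)
    (hdΩ : ∀ i j x, d (Ω i j * x) = d (Ω i j) * x + Ω i j * d x) :
    (Even n → d (psiForm n u θ Ω) = 0) ∧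
      (Odd n → d (psiForm n u θ Ω) = -eulerCurvatureForm n Ω) := by
  have hskew0 : ∀ i, ω i i = 0 := fun i => self_eq_neg_aux (hskew i i)
  have h1 : d 1 = 0 := by
    have h : ∀ i, u i * d 1 = 0 := fun i => by
      have := hdu i 1
      rw [mul_one, mul_one] at this
      exact left_eq_add.mp this
    calc d 1 = (∑ i, u i * u i) * d 1 := by rw [hunit, one_mul]
      _ = ∑ i, u i * (u i * d 1) := by rw [Finset.sum_mul]; simp only [mul_assoc]
      _ = 0 := by simp [h]
  have du : ∀ i, d (u i) = θ i - ∑ k, ω i k * u k := fun i => by rw [hθ]; abel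
  have dω : ∀ i j, d (ω i j) = Ω i j - ∑ k, ω i k * ω k j := fun i j => by rw [hΩ]; abel
  have dθ : ∀ i, d (θ i) = (∑ k, Ω i k * u k) - ∑ k, ω i k * θ k := by
    intro i
    have e : ∀ j, d (ω i j * u j) = Ω i j * u j - ω i j * θ j
        + (ω i j * (∑ k, ω j k * u k) - (∑ k, ω i k * ω k j) * u j) := by
      intro j; rw [hdω, dω, du]; noncomm_ring
    rw [hθ i, map_add, hdd, zero_add, map_sum]
    simp only [e, Finset.sum_add_distrib, Finset.sum_sub_distrib]
    simp only [Finset.mul_sum, Finset.sum_mul]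
    rw [Finset.sum_comm (f := fun x i_1 => ω i i_1 * ω i_1 x * u x)]
    simp only [mul_assoc, sub_self, add_zero]
  have dΩ' : ∀ i j, d (Ω i j) = - ∑ k, ω i k * Ω k j - ∑ k, ω j k * Ω i k := by
    intro i j
    have e : ∀ k, d (ω i k * ω k j) = - (ω i k * Ω k j) - ω j k * Ω i k
        + (ω i k * (∑ l, ω k l * ω l j) - (∑ l, ω i l * ω l k) * ω k j) := by
      intro k; rw [hdω, dω, dω, hskew j k, neg_mul, ← hΩ_comm i k (ω k j)]; noncomm_ring
    rw [hΩ i j, map_add, hdd, zero_add, map_sum]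
    simp only [e, Finset.sum_add_distrib, Finset.sum_sub_distrib, Finset.sum_neg_distrib]
    simp only [Finset.mul_sum, Finset.sum_mul]
    rw [Finset.sum_comm (f := fun x i_1 => ω i i_1 * ω i_1 x * ω x j)]
    simp only [mul_assoc, sub_self, add_zero]
  have hΩskew : ∀ i j, Ω i j = - Ω j i := by
    intro i j
    have e : ∀ k, ω i k * ω k j = - (ω j k * ω k i) := by
      intro k
      rw [hωω, hskew k j, hskew i k, neg_mul_neg]
    rw [hΩ i j, hΩ j i, hskew i j, map_neg]
    simp only [e, Finset.sum_neg_distrib]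
    abel
  have huω : ∑ i, u i * ∑ k, ω i k * u k = 0 := by
    apply self_eq_neg_aux
    conv_lhs => simp only [Finset.mul_sum]
    rw [Finset.sum_comm, ← Finset.sum_neg_distrib]
    refine Finset.sum_congr rfl fun i _ => ?_
    rw [Finset.mul_sum, ← Finset.sum_neg_distrib]
    refine Finset.sum_congr rfl fun k _ => ?_
    rw [hskew k i, ← hu_comm i, ← hu_comm k]
    rw [mul_neg, mul_neg, neg_inj, ← mul_assoc, ← mul_assoc, hu_comm k (u i)]
  have huθ : ∑ k, u k * θ k = 0 := by
    have h2 : ∑ k, u k * θ k = ∑ k, u k * d (u k) := by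
      have : ∀ k, u k * θ k = u k * d (u k) + u k * ∑ l, ω k l * u l := by
        intro k; rw [du]; noncomm_ring
      simp only [this, Finset.sum_add_distrib, huω, add_zero]
    rw [h2]
    apply self_eq_neg_aux
    rw [eq_neg_iff_add_eq_zero, ← Finset.sum_add_distrib, ← h1, ← hunit, map_sum]
    refine Finset.sum_congr rfl fun k _ => ?_
    rw [hdu, ← hu_comm]
  have hphc : ∀ i x, (∑ k, Ω i k * u k) * x = x * (∑ k, Ω i k * u k) := by
    intro i x
    rw [Finset.sum_mul, Finset.mul_sum]
    refine Finset.sum_congr rfl fun k _ => ?_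
    rw [mul_assoc, hu_comm, ← mul_assoc, hΩ_comm, mul_assoc]
  have main := main_aux d n u θ (fun i => ∑ k, Ω i k * u k) ω Ω hu_comm hskew0 du hdu hθω dθ hdθ
    hΩ_comm h1 dΩ' hdΩ hΩskew (fun _ => rfl) hphc huθ hunit
  exact main

end
end

section
/- Let ξ be a smooth oriented rank-n vector bundle over a smooth manifold M with an SO(n)-connection, let ν be the canonical trivial oriented real line bundle over M with the trivial connection, and let E = ν ⊕ ξ carry the induced metric and SO(n+1)-connection ω with curvature Ω (so the first row and the first column of Ω vanish identically). Then the n-form Ψ on the unit sphere bundle of E (identified with the fibrewise one-point compactification ξ̂ of ξ) is closed: dΨ = 0, for every n (both even and odd). -/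
/-!
STATEMENT 4 (end of Section 1 of "A secondary Chern–Euler class"):
Let `ξ` be a smooth oriented rank-`n` vector bundle over a smooth manifold `M`
with an `SO(n)`-connection, `ν` the canonical trivial oriented real line
bundle over `M` with the trivial connection, and `E = ν ⊕ ξ` with the induced
metric and `SO(n+1)`-connection `ω` with curvature `Ω` — so the first row and
the first column of `ω` and of `Ω` vanish identically.  Then the `n`-form `Ψ`
on the unit sphere bundle of `E` (identified with the fibrewise one-point
compactification `ξ̂` of `ξ`) is closed: `dΨ = 0` for every `n`, both even
and odd.

Mathlib has no differential forms on manifolds (nor principal connections),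
so the calculus of (locally defined) differential forms on the sphere bundle
is abstracted into an associative `ℝ`-algebra `A` together with an `ℝ`-linear
map `d` (the exterior differential), exactly as in the formalization of
Proposition 1.1; the extra hypotheses here are the vanishing of the first row
and the first column of `ω` and `Ω` (the index `0` corresponds to the
`ν`-summand).  Indices are `0`-based: the paper's `u_{τ(1)}` is `u (τ 0)`.
-/

open scoped Nat

noncomputable section

namespace ChernEuler

open Equiv Function

set_option linter.unusedSectionVars false

section Comb
variable {A : Type*} [Ring A] [Algebra ℝ A] {N : ℕ}

def alt (F : (Fin N → Fin N) → A) : A :=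
  ∑ τ : Perm (Fin N), (Perm.sign τ : ℤ) • F τ

lemma alt_reindex (F : (Fin N → Fin N) → A) (σ : Perm (Fin N)) :
    alt (fun f => F (f ∘ σ)) = (Perm.sign σ : ℤ) • alt F := by
  unfold alt
  rw [Finset.smul_sum, ← Equiv.sum_comp (Equiv.mulRight σ)
    (fun τ : Perm (Fin N) => (Perm.sign σ : ℤ) • (Perm.sign τ : ℤ) • F τ)]
  refine Finset.sum_congr rfl fun τ _ => ?_
  simp only [Equiv.coe_mulRight, Perm.sign_mul, Perm.coe_mul, smul_smul, Units.val_mul]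
  congr 1
  rcases Int.units_eq_one_or (Perm.sign σ) with h | h <;> simp [h]

lemma alt_add (F G : (Fin N → Fin N) → A) :
    alt (fun f => F f + G f) = alt F + alt G := by
  simp [alt, smul_add, Finset.sum_add_distrib]

lemma alt_neg (F : (Fin N → Fin N) → A) :
    alt (fun f => - F f) = - alt F := by
  simp [alt]

lemma alt_sub (F G : (Fin N → Fin N) → A) :
    alt (fun f => F f - G f) = alt F - alt G := by
  simp [alt, smul_sub, Finset.sum_sub_distrib]

lemma alt_sum {ι : Type*} (s : Finset ι) (F : ι → (Fin N → Fin N) → A) :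
    alt (fun f => ∑ i ∈ s, F i f) = ∑ i ∈ s, alt (F i) := by
  simp only [alt, Finset.smul_sum]
  rw [Finset.sum_comm]

lemma alt_zsmul (c : ℤ) (F : (Fin N → Fin N) → A) :
    alt (fun f => c • F f) = c • alt F := by
  simp only [alt, Finset.smul_sum]
  exact Finset.sum_congr rfl fun τ _ => smul_comm _ _ _

lemma alt_contr (w : Fin N → A) (k : Fin N) (G : (Fin N → Fin N) → A) :
    ∑ p, alt (fun f => w (f p) * G (update f p k)) = w k * alt G := by
  have key : ∑ z : Fin N × Perm (Fin N),
      ((Perm.sign z.2 : ℤ) • (w (z.2 z.1) * G (update z.2 z.1 k))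
        - if z.2 z.1 = k then (Perm.sign z.2 : ℤ) • (w k * G z.2) else 0) = 0 := by
    refine Finset.sum_involution
      (fun z _ => (z.2.symm k, z.2 * Equiv.swap z.1 (z.2.symm k))) ?_ ?_ ?_ ?_
    · rintro ⟨p, τ⟩ _
      by_cases h : τ p = k
      · subst h
        simp
      · have hpq : p ≠ τ.symm k := fun e => h (by rw [e]; simp)
        have h2 : update (⇑(τ * Equiv.swap p (τ.symm k))) (τ.symm k) k = update (⇑τ) p k := by
          funext x
          by_cases hx : x = τ.symm k
          · subst hx; simp [update_of_ne hpq.symm]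
          · by_cases hx2 : x = p
            · subst hx2; simp [update_of_ne hx]
            · simp [update_of_ne hx, update_of_ne hx2, Equiv.swap_apply_of_ne_of_ne hx2 hx]
        simp only [h2, if_neg h, Perm.sign_mul, Perm.sign_swap hpq]
        simp [h]
    · rintro ⟨p, τ⟩ _ hne heq
      apply hne
      have : τ.symm k = p := (Prod.ext_iff.1 heq).1
      have h : τ p = k := by rw [← this]; simp
      subst h
      simp
    · intro z _; exact Finset.mem_univ _
    · rintro ⟨p, τ⟩ _
      have : (τ * Equiv.swap p (τ.symm k)).symm k = p := by
        rw [Equiv.symm_apply_eq]; simp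
      simp only [this]
      rw [Equiv.swap_comm (τ.symm k) p]
      simp [mul_assoc]
  rw [Finset.sum_sub_distrib, sub_eq_zero, Fintype.sum_prod_type, Fintype.sum_prod_type] at key
  unfold alt
  rw [key, Finset.sum_comm, Finset.mul_sum]
  refine Finset.sum_congr rfl fun τ _ => ?_
  rw [Finset.sum_eq_single (τ.symm k)]
  · simp only [Equiv.apply_symm_apply, if_true, mul_smul_comm]
  · intro b _ hb
    rw [if_neg]
    intro h; exact hb (by rw [← h]; simp)
  · simp

def W (w : Fin N → Fin N → A) (S : Finset (Fin N)) (x : (Fin N → Fin N) → A)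
    (f : Fin N → Fin N) : A :=
  ∑ p ∈ S, ∑ k, w (f p) k * x (update f p k)

lemma alt_W (w : Fin N → Fin N → A) (x : (Fin N → Fin N) → A) :
    alt (W w Finset.univ x) = (∑ k, w k k) * alt x := by
  unfold W
  rw [alt_sum]
  simp_rw [alt_sum]
  rw [Finset.sum_comm, Finset.sum_mul]
  exact Finset.sum_congr rfl fun k _ => alt_contr (fun i => w i k) k x

def Supp (S : Finset (Fin N)) (x : (Fin N → Fin N) → A) : Prop :=
  ∀ f p k, p ∉ S → x (update f p k) = x f

lemma Supp.mul {S T : Finset (Fin N)} {x y : (Fin N → Fin N) → A}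
    (hx : Supp S x) (hy : Supp T y) : Supp (S ∪ T) (fun f => x f * y f) := by
  intro f p k hp
  simp only [Finset.mem_union, not_or] at hp
  simp only [hx f p k hp.1, hy f p k hp.2]

lemma W_mul (w : Fin N → Fin N → A) {S T : Finset (Fin N)} (hST : Disjoint S T)
    {x y : (Fin N → Fin N) → A} (hx : Supp S x) (hy : Supp T y) (ε : ℝ)
    (hε : ∀ i k f, w i k * x f = ε • (x f * w i k)) (f : Fin N → Fin N) :
    W w (S ∪ T) (fun f => x f * y f) f = W w S x f * y f + ε • (x f * W w T y f) := by
  unfold W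
  rw [Finset.sum_union hST]
  congr 1
  · simp only [Finset.sum_mul]
    refine Finset.sum_congr rfl fun p hp => Finset.sum_congr rfl fun k _ => ?_
    rw [hy f p k (Finset.disjoint_left.1 hST hp), mul_assoc]
  · simp only [Finset.mul_sum, Finset.smul_sum]
    refine Finset.sum_congr rfl fun p hp => Finset.sum_congr rfl fun k _ => ?_
    rw [hx f p k (Finset.disjoint_right.1 hST hp), ← mul_assoc, hε, smul_mul_assoc, mul_assoc]

lemma exists_cycle {m : ℕ} (g : Fin (m + 1) → Fin N) (hg : Injective g) (i : Fin (m + 1)) :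
    ∃ σ : Perm (Fin N), (Perm.sign σ : ℤ) = (-1) ^ (i : ℕ) ∧ σ (g 0) = g i ∧
      (∀ l : Fin m, σ (g l.succ) = g (i.succAbove l)) ∧ ∀ x, (∀ l, g l ≠ x) → σ x = x := by
  let e : Fin (m + 1) ↪ Fin N := ⟨g, hg⟩
  refine ⟨Perm.viaFintypeEmbedding (Fin.cycleRange i).symm e, ?_, ?_, ?_, ?_⟩
  · rw [Perm.viaFintypeEmbedding_sign, Perm.sign_symm, Fin.sign_cycleRange]; simp
  · have := Perm.viaFintypeEmbedding_apply_image (Fin.cycleRange i).symm e 0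
    rw [Fin.cycleRange_symm_zero] at this
    exact this
  · intro l
    have := Perm.viaFintypeEmbedding_apply_image (Fin.cycleRange i).symm e l.succ
    rw [Fin.cycleRange_symm_succ] at this
    exact this
  · intro x hx
    apply Perm.viaFintypeEmbedding_apply_notMem_range
    rintro ⟨l, hl⟩
    exact hx l hl

def P (θ : Fin N → A) {m : ℕ} (g : Fin m → Fin N) (f : Fin N → Fin N) : A :=
  (List.ofFn fun i => θ (f (g i))).prod

def Q (Ω : Fin N → Fin N → A) {j : ℕ} (h₁ h₂ : Fin j → Fin N) (f : Fin N → Fin N) : A :=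
  (List.ofFn fun t => Ω (f (h₁ t)) (f (h₂ t))).prod

lemma P_succ (θ : Fin N → A) {m : ℕ} (g : Fin (m + 1) → Fin N) (f : Fin N → Fin N) :
    P θ g f = θ (f (g 0)) * P θ (fun i => g i.succ) f := by
  simp [P, List.ofFn_succ]

lemma Q_succ (Ω : Fin N → Fin N → A) {j : ℕ} (h₁ h₂ : Fin (j + 1) → Fin N) (f : Fin N → Fin N) :
    Q Ω h₁ h₂ f = Ω (f (h₁ 0)) (f (h₂ 0)) *
      Q Ω (fun i => h₁ i.succ) (fun i => h₂ i.succ) f := by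
  simp [Q, List.ofFn_succ]

lemma Q_eq_zero (Ω : Fin N → Fin N → A) {j : ℕ} (h₁ h₂ : Fin j → Fin N) (f : Fin N → Fin N)
    (t : Fin j) (ht : Ω (f (h₁ t)) (f (h₂ t)) = 0) : Q Ω h₁ h₂ f = 0 := by
  induction j with
  | zero => exact t.elim0
  | succ j ih =>
    rw [Q_succ]
    rcases Fin.eq_zero_or_eq_succ t with rfl | ⟨s, rfl⟩
    · rw [ht, zero_mul]
    · rw [ih _ _ s ht, mul_zero]

lemma P_supp (θ : Fin N → A) {m : ℕ} (g : Fin m → Fin N) :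
    Supp (Finset.univ.image g) (P θ g) := by
  intro f p k hp
  unfold P
  congr 2
  funext i
  rw [update_of_ne]
  rintro rfl
  exact hp (Finset.mem_image_of_mem _ (Finset.mem_univ _))

lemma Q_supp (Ω : Fin N → Fin N → A) {j : ℕ} (h₁ h₂ : Fin j → Fin N) :
    Supp (Finset.univ.image h₁ ∪ Finset.univ.image h₂) (Q Ω h₁ h₂) := by
  intro f p k hp
  simp only [Finset.mem_union, not_or] at hp
  unfold Q
  congr 2
  funext i
  rw [update_of_ne, update_of_ne]
  · rintro rfl
    exact hp.2 (Finset.mem_image_of_mem _ (Finset.mem_univ _))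
  · rintro rfl
    exact hp.1 (Finset.mem_image_of_mem _ (Finset.mem_univ _))

lemma image_fin_succ {m : ℕ} (g : Fin (m + 1) → Fin N) :
    Finset.univ.image g = {g 0} ∪ Finset.univ.image (fun i : Fin m => g i.succ) := by
  ext x
  simp only [Finset.mem_image, Finset.mem_univ, true_and, Finset.mem_union, Finset.mem_singleton,
    Fin.exists_fin_succ, eq_comm]

lemma supp_single (θ : Fin N → A) (a : Fin N) : Supp {a} (fun f => θ (f a)) := by
  intro f p k hp
  simp only [Finset.mem_singleton] at hp
  simp only [update_of_ne (Ne.symm hp)]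

lemma supp_pair (Ω : Fin N → Fin N → A) (a b : Fin N) :
    Supp {a, b} (fun f => Ω (f a) (f b)) := by
  intro f p k hp
  simp only [Finset.mem_insert, Finset.mem_singleton, not_or] at hp
  simp only [update_of_ne (Ne.symm hp.1), update_of_ne (Ne.symm hp.2)]

lemma W_single (w : Fin N → Fin N → A) (θ : Fin N → A) (a : Fin N) (f : Fin N → Fin N) :
    W w {a} (fun f => θ (f a)) f = ∑ k, w (f a) k * θ k := by
  simp [W]

lemma W_pair (w : Fin N → Fin N → A) (Ω : Fin N → Fin N → A) (a b : Fin N) (hab : a ≠ b)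
    (f : Fin N → Fin N) :
    W w {a, b} (fun f => Ω (f a) (f b)) f =
      ∑ k, w (f a) k * Ω k (f b) + ∑ k, w (f b) k * Ω (f a) k := by
  simp [W, Finset.sum_pair hab, update_of_ne hab, update_of_ne hab.symm]

end Comb

section Calc
variable {A : Type*} [Ring A] [Algebra ℝ A] {N : ℕ}

structure Good (d : A →ₗ[ℝ] A) (ω : Fin N → Fin N → A) (x Dx : (Fin N → Fin N) → A)
    (ε : ℝ) (S : Finset (Fin N)) : Prop where
  supp : Supp S x
  leib : ∀ f y, d (x f * y) = d (x f) * y + ε • (x f * d y)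
  comm : ∀ i k f, ω i k * x f = ε • (x f * ω i k)
  der : ∀ f, d (x f) = Dx f - W ω S x f

lemma Good.mul {d : A →ₗ[ℝ] A} {ω : Fin N → Fin N → A} {x Dx y Dy : (Fin N → Fin N) → A}
    {ε δ : ℝ} {S T : Finset (Fin N)} (hx : Good d ω x Dx ε S) (hy : Good d ω y Dy δ T)
    (hST : Disjoint S T) :
    Good d ω (fun f => x f * y f) (fun f => Dx f * y f + ε • (x f * Dy f)) (ε * δ) (S ∪ T) where
  supp := hx.supp.mul hy.supp
  leib f z := by
    rw [mul_assoc, hx.leib, hy.leib, hx.leib]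
    simp only [mul_add, add_mul, smul_add, mul_assoc, mul_smul_comm, smul_mul_assoc, smul_smul]
    abel
  comm i k f := by
    rw [← mul_assoc, hx.comm, smul_mul_assoc, mul_assoc, hy.comm, mul_smul_comm, smul_smul,
      mul_assoc]
  der f := by
    rw [hx.leib, W_mul ω hST hx.supp hy.supp ε hx.comm, hx.der, hy.der]
    simp only [mul_sub, sub_mul, smul_sub]
    abel

structure Setup (d : A →ₗ[ℝ] A) (u θ : Fin N → A) (ω Ω : Fin N → Fin N → A) : Prop where
  hθ : ∀ i, θ i = d (u i) + ∑ j, ω i j * u j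
  hΩ : ∀ i j, Ω i j = d (ω i j) + ∑ k, ω i k * ω k j
  hskew : ∀ i j, ω i j = -ω j i
  hunit : (∑ i, u i * u i) = 1
  hu_comm : ∀ i x, u i * x = x * u i
  hΩ_comm : ∀ i j x, Ω i j * x = x * Ω i j
  hθθ : ∀ i j, θ i * θ j = -(θ j * θ i)
  hθω : ∀ i j k, θ i * ω j k = -(ω j k * θ i)
  hωω : ∀ i j k l, ω i j * ω k l = -(ω k l * ω i j)
  hdd : ∀ x, d (d x) = 0
  hdu : ∀ i x, d (u i * x) = d (u i) * x + u i * d x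
  hdθ : ∀ i x, d (θ i * x) = d (θ i) * x - θ i * d x
  hdω : ∀ i j x, d (ω i j * x) = d (ω i j) * x - ω i j * d x
  hdΩ : ∀ i j x, d (Ω i j * x) = d (Ω i j) * x + Ω i j * d x

variable {d : A →ₗ[ℝ] A} {u θ : Fin N → A} {ω Ω : Fin N → Fin N → A}

def V (u : Fin N → A) (Ω : Fin N → Fin N → A) (i : Fin N) : A := ∑ k, Ω i k * u k

lemma self_neg {x : A} (h : x = -x) : x = 0 := by
  have h2 : (2 : ℝ) • x = 0 := by rw [two_smul]; nth_rw 2 [h]; simp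
  exact (smul_eq_zero_iff_right (by norm_num)).1 h2

lemma Setup.d_one (H : Setup d u θ ω Ω) : d 1 = 0 := by
  have h : ∀ i, u i * d 1 = 0 := by
    intro i
    have := H.hdu i 1
    rw [mul_one, mul_one] at this
    exact (left_eq_add.1 this)
  calc d 1 = (∑ i, u i * u i) * d 1 := by rw [H.hunit, one_mul]
    _ = 0 := by rw [Finset.sum_mul]; simp [mul_assoc, h]

lemma Setup.ω_diag (H : Setup d u θ ω Ω) (k) : ω k k = 0 := self_neg (H.hskew k k)

lemma Setup.Ω_skew (H : Setup d u θ ω Ω) (i j) : Ω i j = - Ω j i := by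
  rw [H.hΩ, H.hΩ j i, H.hskew i j, map_neg, neg_add, ← Finset.sum_neg_distrib]
  congr 1
  refine Finset.sum_congr rfl fun k _ => ?_
  rw [H.hωω, H.hskew k j, H.hskew i k, neg_mul_neg]

lemma Setup.u_dot_θ (H : Setup d u θ ω Ω) : ∑ k, u k * θ k = 0 := by
  have h1 : ∑ k, u k * d (u k) = 0 := by
    have h := congrArg d H.hunit
    rw [H.d_one, map_sum] at h
    have e : ∀ k, d (u k * u k) = (2 : ℝ) • (u k * d (u k)) := by
      intro k; rw [H.hdu, ← H.hu_comm, two_smul]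
    simp only [e, ← Finset.smul_sum] at h
    exact (smul_eq_zero_iff_right (by norm_num)).1 h
  have h2 : ∑ k, ∑ j, u k * (ω k j * u j) = 0 := by
    apply self_neg
    conv_lhs => rw [Finset.sum_comm]
    rw [← Finset.sum_neg_distrib]
    refine Finset.sum_congr rfl fun k _ => ?_
    rw [← Finset.sum_neg_distrib]
    refine Finset.sum_congr rfl fun j _ => ?_
    rw [H.hskew j k, H.hu_comm j, H.hu_comm k]
    simp only [neg_mul, mul_assoc]
    rw [H.hu_comm k]
  simp only [H.hθ, mul_add, Finset.sum_add_distrib, Finset.mul_sum, h1, h2, add_zero]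

lemma Setup.V_comm (H : Setup d u θ ω Ω) (i x) : V u Ω i * x = x * V u Ω i := by
  unfold V
  rw [Finset.sum_mul, Finset.mul_sum]
  refine Finset.sum_congr rfl fun k _ => ?_
  rw [mul_assoc, H.hu_comm, ← mul_assoc, H.hΩ_comm, mul_assoc]

lemma Setup.d_θ (H : Setup d u θ ω Ω) (i) : d (θ i) = V u Ω i - ∑ k, ω i k * θ k := by
  conv_lhs => rw [H.hθ]
  rw [map_add, H.hdd, zero_add, map_sum]
  simp only [H.hdω]
  have e1 : ∀ k, d (ω i k) = Ω i k - ∑ l, ω i l * ω l k := fun k => by rw [H.hΩ]; abel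
  have e2 : ∀ k, d (u k) = θ k - ∑ l, ω k l * u l := fun k => by rw [H.hθ]; abel
  simp only [e1, e2, sub_mul, mul_sub, Finset.sum_sub_distrib, Finset.sum_mul, Finset.mul_sum, V]
  rw [Finset.sum_comm (f := fun x y => ω i y * ω y x * u x)]
  simp only [mul_assoc]
  abel

lemma Setup.d_Ω (H : Setup d u θ ω Ω) (i j) :
    d (Ω i j) = - (∑ k, ω i k * Ω k j + ∑ k, ω j k * Ω i k) := by
  conv_lhs => rw [H.hΩ]
  rw [map_add, H.hdd, zero_add, map_sum]
  simp only [H.hdω]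
  have e1 : ∀ i k, d (ω i k) = Ω i k - ∑ l, ω i l * ω l k := fun i k => by rw [H.hΩ]; abel
  simp only [e1, sub_mul, mul_sub, Finset.sum_sub_distrib, Finset.sum_mul, Finset.mul_sum]
  rw [Finset.sum_comm (f := fun x y => ω i y * ω y x * ω x j)]
  have e3 : ∑ k, Ω i k * ω k j = - ∑ k, ω j k * Ω i k := by
    rw [← Finset.sum_neg_distrib]
    refine Finset.sum_congr rfl fun k _ => ?_
    rw [H.hΩ_comm, H.hskew k j, neg_mul]
  rw [e3]
  simp only [mul_assoc]
  abel

lemma Setup.good_u (H : Setup d u θ ω Ω) (a : Fin N) :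
    Good d ω (fun f => u (f a)) (fun f => θ (f a)) 1 {a} where
  supp := supp_single u a
  leib f y := by rw [H.hdu, one_smul]
  comm i k f := by rw [one_smul, H.hu_comm]
  der f := by rw [W_single, H.hθ]; abel

lemma Setup.good_θ (H : Setup d u θ ω Ω) (a : Fin N) :
    Good d ω (fun f => θ (f a)) (fun f => V u Ω (f a)) (-1) {a} where
  supp := supp_single θ a
  leib f y := by rw [H.hdθ, neg_one_smul, sub_eq_add_neg]
  comm i k f := by rw [neg_one_smul, H.hθω, neg_neg]
  der f := by rw [W_single, H.d_θ]

lemma Setup.good_Ω (H : Setup d u θ ω Ω) (a b : Fin N) (hab : a ≠ b) :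
    Good d ω (fun f => Ω (f a) (f b)) (fun _ => 0) 1 {a, b} where
  supp := supp_pair Ω a b
  leib f y := by rw [H.hdΩ, one_smul]
  comm i k f := by rw [one_smul, H.hΩ_comm]
  der f := by rw [W_pair _ _ _ _ hab, H.d_Ω, zero_sub]

lemma Setup.good_one (H : Setup d u θ ω Ω) :
    Good d ω (fun _ => 1) (fun _ => 0) 1 ∅ where
  supp f p k _ := rfl
  leib f y := by rw [H.d_one]; simp
  comm i k f := by simp
  der f := by simp [W, H.d_one]

def DP (u θ : Fin N → A) (Ω : Fin N → Fin N → A) :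
    {m : ℕ} → (Fin m → Fin N) → (Fin N → Fin N) → A
  | 0, _, _ => 0
  | _ + 1, g, f => V u Ω (f (g 0)) * P θ (fun i => g i.succ) f
      - θ (f (g 0)) * DP u θ Ω (fun i => g i.succ) f

lemma Setup.good_P (H : Setup d u θ ω Ω) {m : ℕ} (g : Fin m → Fin N) (hg : Injective g) :
    Good d ω (P θ g) (DP u θ Ω g) ((-1) ^ m) (Finset.univ.image g) := by
  induction m with
  | zero =>
    convert H.good_one using 1
    · funext f; simp [P]
    · funext f; simp [DP]
    · simp
    · simp
  | succ m ih =>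
    have h2 := ih (fun i => g i.succ) (hg.comp (Fin.succ_injective _))
    have h1 := (H.good_θ (g 0)).mul h2 (by
      simp only [Finset.disjoint_singleton_left, Finset.mem_image, not_exists, not_and]
      intro i _ h
      exact Fin.succ_ne_zero i (hg h))
    rw [image_fin_succ]
    convert h1 using 1
    · funext f; rw [P_succ]
    · funext f; rw [DP, neg_one_smul, sub_eq_add_neg]
    · ring

lemma image_pair {j : ℕ} (h₁ h₂ : Fin (j + 1) → Fin N) :
    Finset.univ.image h₁ ∪ Finset.univ.image h₂ =
    {h₁ 0, h₂ 0} ∪ (Finset.univ.image (fun i : Fin j => h₁ i.succ) ∪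
      Finset.univ.image (fun i : Fin j => h₂ i.succ)) := by
  rw [image_fin_succ h₁, image_fin_succ h₂]
  ext x
  simp only [Finset.mem_union, Finset.mem_singleton, Finset.mem_insert]
  tauto

lemma pair_disj {j : ℕ} (h₁ h₂ : Fin (j + 1) → Fin N) (i₁ : Injective h₁)
    (i₂ : Injective h₂) (i₃ : ∀ s t, h₁ s ≠ h₂ t) :
    Disjoint {h₁ 0, h₂ 0} (Finset.univ.image (fun i : Fin j => h₁ i.succ) ∪
      Finset.univ.image (fun i : Fin j => h₂ i.succ)) := by
  rw [Finset.disjoint_left]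
  intro x hx hx2
  simp only [Finset.mem_insert, Finset.mem_singleton, Finset.mem_union, Finset.mem_image,
    Finset.mem_univ, true_and] at hx hx2
  rcases hx with rfl | rfl <;> rcases hx2 with ⟨i, h⟩ | ⟨i, h⟩
  · exact Fin.succ_ne_zero i (i₁ h)
  · exact i₃ _ _ h.symm
  · exact i₃ _ _ h
  · exact Fin.succ_ne_zero i (i₂ h)

lemma Setup.good_Q (H : Setup d u θ ω Ω) {j : ℕ} (h₁ h₂ : Fin j → Fin N) (i₁ : Injective h₁)
    (i₂ : Injective h₂) (i₃ : ∀ s t, h₁ s ≠ h₂ t) :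
    Good d ω (Q Ω h₁ h₂) (fun _ => 0) 1 (Finset.univ.image h₁ ∪ Finset.univ.image h₂) := by
  induction j with
  | zero =>
    convert H.good_one using 1
    · funext f; simp [Q]
    · simp
  | succ j ih =>
    have h2 := ih (fun i => h₁ i.succ) (fun i => h₂ i.succ) (i₁.comp (Fin.succ_injective _))
      (i₂.comp (Fin.succ_injective _)) (fun s t => i₃ _ _)
    have h1 := (H.good_Ω (h₁ 0) (h₂ 0) (i₃ _ _)).mul h2 (pair_disj h₁ h₂ i₁ i₂ i₃)
    rw [image_pair]
    convert h1 using 1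
    · funext f; rw [Q_succ]
    · funext f; simp
    · simp

lemma Setup.DP_eq (H : Setup d u θ ω Ω) {m : ℕ} (g : Fin (m + 1) → Fin N) (f) :
    DP u θ Ω g f = ∑ i : Fin (m + 1), (-1 : ℤ) ^ (i : ℕ) •
      (V u Ω (f (g i)) * P θ (fun l => g (i.succAbove l)) f) := by
  induction m with
  | zero => simp [DP]
  | succ m ih =>
    rw [DP, ih, Fin.sum_univ_succ (n := m + 1), sub_eq_add_neg]
    congr 1
    · simp
    · rw [Finset.mul_sum, ← Finset.sum_neg_distrib]
      refine Finset.sum_congr rfl fun i _ => ?_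
      rw [P_succ θ (fun l => g (i.succ.succAbove l))]
      simp only [Fin.succ_succAbove_zero, Fin.succ_succAbove_succ, Fin.val_succ, pow_succ]
      rw [mul_smul_comm, ← mul_assoc, ← H.V_comm, mul_assoc]
      simp

/-- contraction with u -/
lemma Setup.uu_comm (H : Setup d u θ ω Ω) (i k) (x : A) :
    u i * u k * x = (1 : ℝ) • (x * (u i * u k)) := by
  rw [one_smul, mul_assoc, H.hu_comm k, H.hu_comm i, mul_assoc, H.hu_comm k (u i)]

lemma Setup.W_P (H : Setup d u θ ω Ω) {m : ℕ} (g : Fin m → Fin N) (hg : Injective g) (f) :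
    W (fun i k => u i * u k) (Finset.univ.image g) (P θ g) f = 0 := by
  induction m with
  | zero => simp [W]
  | succ m ih =>
    rw [image_fin_succ]
    have e : P θ g = fun f => θ (f (g 0)) * P θ (fun i => g i.succ) f := by
      funext f; rw [P_succ]
    rw [e, W_mul _ _ (supp_single θ _) (P_supp θ _) 1 (fun i k f => H.uu_comm i k _),
      ih (fun i => g i.succ) (hg.comp (Fin.succ_injective _)), W_single]
    · simp only [mul_assoc, ← Finset.mul_sum, H.u_dot_θ]
      simp
    · simp only [Finset.disjoint_singleton_left, Finset.mem_image, not_exists, not_and]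
      intro i _ h
      exact Fin.succ_ne_zero i (hg h)

lemma Setup.W_Q_zero (w : Fin N → Fin N → A) (h₁ h₂ : Fin 0 → Fin N) (f) :
    W w (Finset.univ.image h₁ ∪ Finset.univ.image h₂)
      (Q Ω h₁ h₂) f = 0 := by
  simp [W]

lemma Setup.W_Q (H : Setup d u θ ω Ω) {j : ℕ} (h₁ h₂ : Fin (j + 1) → Fin N) (i₁ : Injective h₁)
    (i₂ : Injective h₂) (i₃ : ∀ s t, h₁ s ≠ h₂ t) (f) :
    W (fun i k => u i * u k) (Finset.univ.image h₁ ∪ Finset.univ.image h₂)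
      (Q Ω h₁ h₂) f = ∑ t : Fin (j + 1),
      (u (f (h₂ t)) * V u Ω (f (h₁ t)) - u (f (h₁ t)) * V u Ω (f (h₂ t))) *
        Q Ω (fun l => h₁ (t.succAbove l)) (fun l => h₂ (t.succAbove l)) f := by
  have e4 : ∀ {j : ℕ} (h₁ h₂ : Fin (j + 1) → Fin N), Q Ω h₁ h₂ = fun f =>
      Ω (f (h₁ 0)) (f (h₂ 0)) * Q Ω (fun i => h₁ i.succ) (fun i => h₂ i.succ) f := by
    intro j h₁ h₂; funext f; rw [Q_succ]
  have e5 : ∀ a b : Fin N, ∑ k, u a * u k * Ω k b + ∑ k, u b * u k * Ω a k =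
      u b * V u Ω a - u a * V u Ω b := by
    intro a b
    unfold V
    rw [Finset.mul_sum, Finset.mul_sum, add_comm, sub_eq_add_neg, ← Finset.sum_neg_distrib]
    congr 1
    · refine Finset.sum_congr rfl fun k _ => ?_
      rw [mul_assoc, H.hu_comm k]
    · refine Finset.sum_congr rfl fun k _ => ?_
      rw [mul_assoc, H.hu_comm k, H.Ω_skew k b]; simp
  induction j with
  | zero =>
    rw [image_pair, e4, W_mul _ (pair_disj h₁ h₂ i₁ i₂ i₃) (supp_pair Ω _ _) (Q_supp Ω _ _) 1
      (fun i k f => H.uu_comm i k _), W_pair _ _ _ _ (i₃ _ _), e5, Setup.W_Q_zero]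
    simp [Q]
  | succ j ih =>
    rw [image_pair, e4, W_mul _ (pair_disj h₁ h₂ i₁ i₂ i₃) (supp_pair Ω _ _) (Q_supp Ω _ _) 1
      (fun i k f => H.uu_comm i k _), W_pair _ _ _ _ (i₃ _ _), e5,
      ih (fun i => h₁ i.succ) (fun i => h₂ i.succ) (i₁.comp (Fin.succ_injective _)) (i₂.comp (Fin.succ_injective _)) (fun s t => i₃ _ _),
      Fin.sum_univ_succ (n := j + 1), one_smul, Finset.mul_sum]
    congr 1
    refine Finset.sum_congr rfl fun t _ => ?_
    rw [Q_succ Ω (fun l => h₁ (t.succ.succAbove l))]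
    simp only [Fin.succ_succAbove_zero, Fin.succ_succAbove_succ]
    rw [H.hΩ_comm, mul_assoc, ← H.hΩ_comm]

end Calc

section Main
variable {A : Type*} [Ring A] [Algebra ℝ A] {N : ℕ}

structure Pos {m j : ℕ} (g : Fin m → Fin N) (h₁ h₂ : Fin j → Fin N) : Prop where
  ig : Injective g
  i1 : Injective h₁
  i2 : Injective h₂
  d12 : ∀ s t, h₁ s ≠ h₂ t
  dg1 : ∀ s t, g s ≠ h₁ t
  dg2 : ∀ s t, g s ≠ h₂ t
  cover : ∀ p, (∃ i, g i = p) ∨ (∃ t, h₁ t = p) ∨ ∃ t, h₂ t = p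

lemma Pos.univ_eq {m j : ℕ} {g : Fin m → Fin N} {h₁ h₂ : Fin j → Fin N} (hp : Pos g h₁ h₂) :
    (Finset.univ : Finset (Fin N)) =
      Finset.univ.image g ∪ (Finset.univ.image h₁ ∪ Finset.univ.image h₂) := by
  ext p
  have := hp.cover p
  simpa using this

lemma Pos.disj {m j : ℕ} {g : Fin m → Fin N} {h₁ h₂ : Fin j → Fin N} (hp : Pos g h₁ h₂) :
    Disjoint (Finset.univ.image g) (Finset.univ.image h₁ ∪ Finset.univ.image h₂) := by
  rw [Finset.disjoint_left]
  intro x hx hx2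
  simp only [Finset.mem_union, Finset.mem_image, Finset.mem_univ, true_and] at hx hx2
  obtain ⟨i, rfl⟩ := hx
  rcases hx2 with ⟨t, h⟩ | ⟨t, h⟩
  · exact hp.dg1 _ _ h.symm
  · exact hp.dg2 _ _ h.symm

variable {d : A →ₗ[ℝ] A} {u θ : Fin N → A} {ω Ω : Fin N → Fin N → A}

def Xg (u θ : Fin N → A) (Ω : Fin N → Fin N → A) (a b : Fin N) {m j : ℕ} (g : Fin m → Fin N)
    (h₁ h₂ : Fin j → Fin N) : A :=
  alt (fun f => u (f a) * V u Ω (f b) * P θ g f * Q Ω h₁ h₂ f)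

lemma Xg_perm (σ : Perm (Fin N)) (a b : Fin N) {m j : ℕ} (g : Fin m → Fin N)
    (h₁ h₂ : Fin j → Fin N) :
    Xg u θ Ω (σ a) (σ b) (fun i => σ (g i)) (fun i => σ (h₁ i)) (fun i => σ (h₂ i)) =
      (Perm.sign σ : ℤ) • Xg u θ Ω a b g h₁ h₂ := by
  unfold Xg
  rw [← alt_reindex]
  rfl

lemma Xg_theta {m j : ℕ} {g : Fin (m + 1 + 1) → Fin N} {h₁ h₂ : Fin j → Fin N}
    (hp : Pos g h₁ h₂) (i : Fin (m + 1)) :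
    Xg u θ Ω (g 0) (g i.succ) (fun l => g (i.succAbove l).succ) h₁ h₂ =
      (-1 : ℤ) ^ (i : ℕ) • Xg u θ Ω (g 0) (g 1) (fun l => g l.succ.succ) h₁ h₂ := by
  obtain ⟨σ, hs, h0, hsucc, hfix⟩ := exists_cycle (fun i : Fin (m + 1) => g i.succ)
    (hp.ig.comp (Fin.succ_injective _)) i
  rw [← hs, ← Xg_perm]
  congr 1
  · exact (hfix _ fun l h => Fin.succ_ne_zero l (hp.ig h)).symm
  · exact h0.symm
  · funext l; exact (hsucc l).symm
  · funext l; exact (hfix _ fun s => hp.dg1 _ _).symm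
  · funext l; exact (hfix _ fun s => hp.dg2 _ _).symm

lemma Xg_pair {m j : ℕ} {g : Fin m → Fin N} {h₁ h₂ : Fin (j + 1) → Fin N}
    (hp : Pos g h₁ h₂) (t : Fin (j + 1)) :
    Xg u θ Ω (h₁ t) (h₂ t) g (fun l => h₁ (t.succAbove l)) (fun l => h₂ (t.succAbove l)) =
      Xg u θ Ω (h₁ 0) (h₂ 0) g (fun l => h₁ l.succ) (fun l => h₂ l.succ) := by
  obtain ⟨σ, hs, h0, hsucc, hfix⟩ := exists_cycle h₁ hp.i1 t
  obtain ⟨σ', hs', h0', hsucc', hfix'⟩ := exists_cycle h₂ hp.i2 t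
  have hsg : (Perm.sign (σ * σ') : ℤ) = 1 := by
    rw [Perm.sign_mul, Units.val_mul, hs, hs', ← mul_pow]; simp
  have h1 : ∀ s, σ' (h₁ s) = h₁ s := fun s => hfix' _ fun l h => hp.d12 _ _ h.symm
  have h2 : ∀ s, σ (h₂ s) = h₂ s := fun s => hfix _ fun l h => hp.d12 _ _ h
  have := Xg_perm (u := u) (θ := θ) (Ω := Ω) (σ * σ') (h₁ 0) (h₂ 0) g (fun l => h₁ l.succ)
    (fun l => h₂ l.succ)
  rw [hsg, one_smul] at this
  rw [← this]
  simp only [Perm.mul_apply, h1, h2, h0, h0', hsucc, hsucc']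
  congr 1
  funext s
  rw [hfix' _ fun l h => hp.dg2 _ _ h.symm, hfix _ fun l h => hp.dg1 _ _ h.symm]

lemma Xg_swap {m j : ℕ} {g : Fin m → Fin N} {h₁ h₂ : Fin (j + 1) → Fin N}
    (hp : Pos g h₁ h₂) (t : Fin (j + 1)) :
    Xg u θ Ω (h₂ t) (h₁ t) g (fun l => h₁ (t.succAbove l)) (fun l => h₂ (t.succAbove l)) =
      - Xg u θ Ω (h₁ t) (h₂ t) g (fun l => h₁ (t.succAbove l)) (fun l => h₂ (t.succAbove l)) := by
  have := Xg_perm (u := u) (θ := θ) (Ω := Ω) (Equiv.swap (h₁ t) (h₂ t)) (h₁ t) (h₂ t) g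
    (fun l => h₁ (t.succAbove l)) (fun l => h₂ (t.succAbove l))
  rw [Perm.sign_swap (hp.d12 _ _)] at this
  simp only [Units.val_neg, Units.val_one, neg_smul, one_smul] at this
  rw [← this]
  congr 1
  · simp
  · simp
  · funext s; rw [Equiv.swap_apply_of_ne_of_ne (hp.dg1 _ _) (hp.dg2 _ _)]
  · funext s
    rw [Equiv.swap_apply_of_ne_of_ne (fun h => Fin.succAbove_ne t s (hp.i1 h)) (hp.d12 _ _)]
  · funext s
    rw [Equiv.swap_apply_of_ne_of_ne (hp.d12 _ _).symm (fun h => Fin.succAbove_ne t s (hp.i2 h))]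

lemma Setup.P_comm_u (H : Setup d u θ ω Ω) (i) (x : A) : x * u i = u i * x := (H.hu_comm i x).symm

lemma Setup.theta_W (H : Setup d u θ ω Ω) {m j : ℕ} {g : Fin m → Fin N} {h₁ h₂ : Fin j → Fin N}
    (hp : Pos g h₁ h₂) :
    alt (fun f => P θ g f * Q Ω h₁ h₂ f) = alt (fun f => P θ g f *
      W (fun i k => u i * u k) (Finset.univ.image h₁ ∪ Finset.univ.image h₂) (Q Ω h₁ h₂) f) := by
  have h := alt_W (fun i k => u i * u k) (fun f => P θ g f * Q Ω h₁ h₂ f)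
  rw [H.hunit, one_mul] at h
  rw [← h]
  congr 1
  funext f
  rw [hp.univ_eq, W_mul _ hp.disj (P_supp θ g) (Q_supp Ω h₁ h₂) 1 (fun i k f => H.uu_comm i k _),
    H.W_P g hp.ig]
  simp

lemma Setup.theta_zero (H : Setup d u θ ω Ω) {m : ℕ} {g : Fin m → Fin N} {h₁ h₂ : Fin 0 → Fin N}
    (hp : Pos g h₁ h₂) : alt (fun f => P θ g f * Q Ω h₁ h₂ f) = 0 := by
  rw [H.theta_W hp]
  simp only [Setup.W_Q_zero, mul_zero, alt, smul_zero, Finset.sum_const_zero]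

lemma Setup.theta_succ (H : Setup d u θ ω Ω) {m j : ℕ} {g : Fin m → Fin N}
    {h₁ h₂ : Fin (j + 1) → Fin N}
    (hp : Pos g h₁ h₂) : alt (fun f => P θ g f * Q Ω h₁ h₂ f) =
      - ((2 * (j + 1) : ℝ) • Xg u θ Ω (h₁ 0) (h₂ 0) g (fun l => h₁ l.succ) (fun l => h₂ l.succ)) := by
  rw [H.theta_W hp]
  have e : (fun f => P θ g f *
      W (fun i k => u i * u k) (Finset.univ.image h₁ ∪ Finset.univ.image h₂) (Q Ω h₁ h₂) f) =
      fun f => ∑ t : Fin (j + 1), (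
        u (f (h₂ t)) * V u Ω (f (h₁ t)) * P θ g f *
          Q Ω (fun l => h₁ (t.succAbove l)) (fun l => h₂ (t.succAbove l)) f -
        u (f (h₁ t)) * V u Ω (f (h₂ t)) * P θ g f *
          Q Ω (fun l => h₁ (t.succAbove l)) (fun l => h₂ (t.succAbove l)) f) := by
    funext f
    rw [H.W_Q h₁ h₂ hp.i1 hp.i2 hp.d12, Finset.mul_sum]
    refine Finset.sum_congr rfl fun t _ => ?_
    have c : ∀ a b (x : A), x * (u a * V u Ω b) = u a * V u Ω b * x := by
      intro a b x
      rw [← mul_assoc, ← H.hu_comm, mul_assoc, ← H.V_comm, mul_assoc]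
    rw [← mul_assoc, mul_sub, c, c, sub_mul]
  rw [e, alt_sum]
  have e2 : ∀ t ∈ (Finset.univ : Finset (Fin (j + 1))), alt (fun f =>
        u (f (h₂ t)) * V u Ω (f (h₁ t)) * P θ g f *
          Q Ω (fun l => h₁ (t.succAbove l)) (fun l => h₂ (t.succAbove l)) f -
        u (f (h₁ t)) * V u Ω (f (h₂ t)) * P θ g f *
          Q Ω (fun l => h₁ (t.succAbove l)) (fun l => h₂ (t.succAbove l)) f) =
      - ((2 : ℝ) • Xg u θ Ω (h₁ 0) (h₂ 0) g (fun l => h₁ l.succ) (fun l => h₂ l.succ)) := by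
    intro t _
    rw [alt_sub]
    change Xg u θ Ω (h₂ t) (h₁ t) g _ _ - Xg u θ Ω (h₁ t) (h₂ t) g _ _ = _
    rw [Xg_swap hp, Xg_pair hp, two_smul]
    abel
  rw [Finset.sum_congr rfl e2, Finset.sum_const, Finset.card_univ, Fintype.card_fin,
    ← Nat.cast_smul_eq_nsmul ℝ, smul_neg, smul_smul]
  congr 2
  push_cast; ring

lemma d_alt (x : (Fin N → Fin N) → A) : d (alt x) = alt (fun f => d (x f)) := by
  simp only [alt, map_sum, map_zsmul]

lemma Setup.d_psi (H : Setup d u θ ω Ω) {m j : ℕ} {g : Fin (m + 1) → Fin N}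
    {h₁ h₂ : Fin j → Fin N} (hp : Pos g h₁ h₂) :
    d (alt (fun f => u (f (g 0)) * P θ (fun l => g l.succ) f * Q Ω h₁ h₂ f)) =
      alt (fun f => P θ g f * Q Ω h₁ h₂ f) +
      alt (fun f => u (f (g 0)) * DP u θ Ω (fun l => g l.succ) f * Q Ω h₁ h₂ f) := by
  have hP := H.good_P (fun l : Fin m => g l.succ) (hp.ig.comp (Fin.succ_injective _))
  have huP := (H.good_u (g 0)).mul hP (by
      simp only [Finset.disjoint_singleton_left, Finset.mem_image, not_exists, not_and]
      intro i _ h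
      exact Fin.succ_ne_zero i (hp.ig h))
  rw [← image_fin_succ] at huP
  have hG := huP.mul (H.good_Q h₁ h₂ hp.i1 hp.i2 hp.d12) hp.disj
  rw [← hp.univ_eq] at hG
  rw [d_alt]
  simp only [hG.der]
  rw [alt_sub, alt_W]
  simp only [H.ω_diag, Finset.sum_const_zero, zero_mul, sub_zero, one_smul, mul_zero, smul_zero,
    add_zero, add_mul]
  rw [alt_add]
  congr 2
  funext f
  rw [P_succ]

lemma Setup.d_psi_zero (H : Setup d u θ ω Ω) {j : ℕ} {g : Fin (0 + 1) → Fin N}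
    {h₁ h₂ : Fin j → Fin N} (hp : Pos g h₁ h₂) :
    d (alt (fun f => u (f (g 0)) * P θ (fun l => g l.succ) f * Q Ω h₁ h₂ f)) =
      alt (fun f => P θ g f * Q Ω h₁ h₂ f) := by
  rw [H.d_psi hp]
  simp [DP, alt]

lemma Setup.d_psi_succ (H : Setup d u θ ω Ω) {m j : ℕ} {g : Fin (m + 1 + 1) → Fin N}
    {h₁ h₂ : Fin j → Fin N} (hp : Pos g h₁ h₂) :
    d (alt (fun f => u (f (g 0)) * P θ (fun l => g l.succ) f * Q Ω h₁ h₂ f)) =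
      alt (fun f => P θ g f * Q Ω h₁ h₂ f) +
      (m + 1 : ℝ) • Xg u θ Ω (g 0) (g 1) (fun l => g l.succ.succ) h₁ h₂ := by
  rw [H.d_psi hp]
  congr 1
  have e : (fun f => u (f (g 0)) * DP u θ Ω (fun l => g l.succ) f * Q Ω h₁ h₂ f) =
      fun f => ∑ i : Fin (m + 1), (-1 : ℤ) ^ (i : ℕ) • (u (f (g 0)) * V u Ω (f (g i.succ)) *
        P θ (fun l => g (i.succAbove l).succ) f * Q Ω h₁ h₂ f) := by
    funext f
    rw [H.DP_eq, Finset.mul_sum, Finset.sum_mul]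
    refine Finset.sum_congr rfl fun i _ => ?_
    rw [mul_smul_comm, smul_mul_assoc]
    simp only [mul_assoc]
  rw [e, alt_sum]
  have e2 : ∀ i ∈ (Finset.univ : Finset (Fin (m + 1))), alt (fun f =>
      (-1 : ℤ) ^ (i : ℕ) • (u (f (g 0)) * V u Ω (f (g i.succ)) *
        P θ (fun l => g (i.succAbove l).succ) f * Q Ω h₁ h₂ f)) =
      Xg u θ Ω (g 0) (g 1) (fun l => g l.succ.succ) h₁ h₂ := by
    intro i _
    rw [alt_zsmul]
    change _ • Xg u θ Ω (g 0) (g i.succ) _ _ _ = _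
    rw [Xg_theta hp, smul_smul, ← mul_pow]
    simp
  rw [Finset.sum_congr rfl e2, Finset.sum_const, Finset.card_univ, Fintype.card_fin,
    ← Nat.cast_smul_eq_nsmul ℝ]
  push_cast; rfl

end Main

section Concrete
variable {A : Type*} [Ring A] [Algebra ℝ A] {n : ℕ}

def pos (n i : ℕ) : Fin (n + 1) := Fin.ofNat (n + 1) i

lemma pos_inj {i j : ℕ} (hi : i < n + 1) (hj : j < n + 1) (h : pos n i = pos n j) : i = j := by
  have := congrArg Fin.val h
  simpa [pos, Nat.mod_eq_of_lt hi, Nat.mod_eq_of_lt hj] using this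

lemma pos_val (p : Fin (n + 1)) : pos n p.1 = p := by
  apply Fin.ext; simp [pos]

lemma pos_mk {i : ℕ} (hi : i < n + 1) : (⟨i, hi⟩ : Fin (n + 1)) = pos n i := by
  apply Fin.ext; simp [pos, Nat.mod_eq_of_lt hi]

lemma pos_Pos {M j : ℕ} (h : M + 2 * j = n + 1) :
    Pos (fun i : Fin M => pos n i) (fun t : Fin j => pos n (M + 2 * t))
      (fun t : Fin j => pos n (M + 1 + 2 * t)) where
  ig a b e := by have := pos_inj (by omega) (by omega) e; omega
  i1 a b e := by have := pos_inj (by omega) (by omega) e; omega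
  i2 a b e := by have := pos_inj (by omega) (by omega) e; omega
  d12 s t e := by have := pos_inj (by omega) (by omega) e; omega
  dg1 s t e := by have := pos_inj (by omega) (by omega) e; omega
  dg2 s t e := by have := pos_inj (by omega) (by omega) e; omega
  cover p := by
    have hp := p.isLt
    by_cases h1 : p.1 < M
    · exact Or.inl ⟨⟨p.1, h1⟩, pos_val p⟩
    · right
      rcases Nat.even_or_odd' (p.1 - M) with ⟨c, hc | hc⟩
      · left
        refine ⟨⟨c, by omega⟩, ?_⟩
        refine Eq.trans ?_ (pos_val p); congr 1; simp only; omega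
      · right
        refine ⟨⟨c, by omega⟩, ?_⟩
        refine Eq.trans ?_ (pos_val p); congr 1; simp only; omega

variable {d : A →ₗ[ℝ] A} {u θ : Fin (n + 1) → A} {ω Ω : Fin (n + 1) → Fin (n + 1) → A}

/-- θ count M, pairs count j -/
def Th (θ : Fin (n + 1) → A) (Ω : Fin (n + 1) → Fin (n + 1) → A) (M j : ℕ) : A :=
  alt (fun f => P θ (fun i : Fin M => pos n i) f *
    Q Ω (fun t : Fin j => pos n (M + 2 * t)) (fun t : Fin j => pos n (M + 1 + 2 * t)) f)

def X (u θ : Fin (n + 1) → A) (Ω : Fin (n + 1) → Fin (n + 1) → A) (M j : ℕ) : A :=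
  Xg u θ Ω (pos n 0) (pos n 1) (fun i : Fin M => pos n (i + 2))
    (fun t : Fin j => pos n (M + 2 + 2 * t)) (fun t : Fin j => pos n (M + 3 + 2 * t))

def Psi (u θ : Fin (n + 1) → A) (Ω : Fin (n + 1) → Fin (n + 1) → A) (m j : ℕ) : A :=
  alt (fun f => u (f (pos n 0)) * P θ (fun i : Fin m => pos n (i + 1)) f *
    Q Ω (fun t : Fin j => pos n (m + 1 + 2 * t)) (fun t : Fin j => pos n (m + 2 + 2 * t)) f)

lemma psiJ_eq (j : ℕ) (hj : 2 * j ≤ n) : psiJ n u θ Ω j hj = Psi u θ Ω (n - 2 * j) j := by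
  unfold psiJ Psi alt P Q
  refine Finset.sum_congr rfl fun τ _ => ?_
  simp only [pos_mk]
  rfl

lemma X_rot {M j : ℕ} (h : M + 2 * (j + 1) = n + 1) :
    Xg u θ Ω (pos n M) (pos n (M + 1)) (fun i : Fin M => pos n i)
      (fun t : Fin j => pos n (M + 2 * (t + 1))) (fun t : Fin j => pos n (M + 1 + 2 * (t + 1))) =
    X u θ Ω M j := by
  set c : Perm (Fin (n + 1)) := Fin.cycleRange (pos n (M + 1)) with hc
  have hs : (Perm.sign (c * c) : ℤ) = 1 := by
    rw [Perm.sign_mul]; simp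
  have v : ∀ i < n + 1, (pos n i).1 = i := fun i hi => by simp [pos, Nat.mod_eq_of_lt hi]
  have c1 : ∀ i < M + 1, c (pos n i) = pos n (i + 1) := by
    intro i hi
    rw [hc, Fin.cycleRange_of_lt]
    · apply Fin.ext
      rw [Fin.val_add_one_of_lt, v, v] <;> first | omega | skip
      rw [Fin.lt_def, v _ (by omega), Fin.val_last]; omega
    · rw [Fin.lt_def, v _ (by omega), v _ (by omega)]; exact hi
  have c2 : c (pos n (M + 1)) = pos n 0 := by
    rw [hc, Fin.cycleRange_self]; rfl
  have c3 : ∀ i, M + 1 < i → i < n + 1 → c (pos n i) = pos n i := by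
    intro i hi hi2
    rw [hc, Fin.cycleRange_of_gt]
    rw [Fin.lt_def, v _ (by omega), v _ (by omega)]; exact hi
  have := Xg_perm (u := u) (θ := θ) (Ω := Ω) (c * c) (pos n M) (pos n (M + 1))
    (fun i : Fin M => pos n i)
      (fun t : Fin j => pos n (M + 2 * (t + 1))) (fun t : Fin j => pos n (M + 1 + 2 * (t + 1)))
  rw [hs, one_smul] at this
  rw [← this]
  unfold X
  simp only [Perm.mul_apply]
  congr 1
  · rw [c1 M (by omega), c2]
  · rw [c2, c1 0 (by omega)]
  · funext i
    rw [c1 _ (by omega), c1 _ (by omega)]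
  · funext i
    rw [c3 _ (by omega) (by omega), c3 _ (by omega) (by omega)]; congr 1; omega
  · funext i
    rw [c3 _ (by omega) (by omega), c3 _ (by omega) (by omega)]; congr 1; omega

lemma Th_succ (H : Setup d u θ ω Ω) {M j : ℕ} (h : M + 2 * (j + 1) = n + 1) :
    Th θ Ω M (j + 1) = - ((2 * (j + 1) : ℝ) • X u θ Ω M j) := by
  unfold Th
  rw [H.theta_succ (pos_Pos h), ← X_rot h]
  rfl

lemma Th_zero (H : Setup d u θ ω Ω) : Th θ Ω (n + 1) 0 = 0 :=
  H.theta_zero (pos_Pos (by omega))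

lemma Th_pf (h0 : ∀ j, Ω 0 j = 0) (h0' : ∀ j, Ω j 0 = 0) {j : ℕ} (h : 0 + 2 * j = n + 1) :
    Th θ Ω 0 j = 0 := by
  unfold Th alt
  refine Finset.sum_eq_zero fun τ _ => ?_
  have hp := pos_Pos h
  rw [smul_eq_zero_of_right]
  beta_reduce
  rcases hp.cover (τ.symm 0) with ⟨i, _⟩ | ⟨t, ht⟩ | ⟨t, ht⟩
  · exact i.elim0
  · rw [Q_eq_zero _ _ _ _ t, mul_zero]
    rw [ht]; simp [h0]
  · rw [Q_eq_zero _ _ _ _ t, mul_zero]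
    rw [ht]; simp [h0']

lemma d_Psi (H : Setup d u θ ω Ω) {m j : ℕ} (h : m + 2 * j = n) :
    d (Psi u θ Ω m j) = Th θ Ω (m + 1) j + (m : ℝ) • X u θ Ω (m - 1) j := by
  have hp := pos_Pos (n := n) (M := m + 1) (j := j) (by omega)
  cases m with
  | zero =>
    have := H.d_psi_zero hp
    rw [Nat.cast_zero, zero_smul, add_zero]
    exact this
  | succ m =>
    have := H.d_psi_succ hp
    rw [Nat.cast_succ]
    exact this

lemma sum_eq (H : Setup d u θ ω Ω) (J : ℕ) (hJ : 2 * J ≤ n) :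
    ∑ j ∈ Finset.range (J + 1), ((2 ^ j * j.factorial * (n - 2 * j)‼ : ℝ))⁻¹ •
      d (Psi u θ Ω (n - 2 * j) j) =
    (((2 ^ J * J.factorial * (n - 2 * J)‼ : ℝ))⁻¹ * ((n - 2 * J : ℕ) : ℝ)) •
      X u θ Ω (n - 2 * J - 1) J := by
  induction J with
  | zero =>
    rw [Finset.sum_range_one, d_Psi H (by omega)]
    simp only [Nat.mul_zero, Nat.sub_zero]
    rw [Th_zero H, zero_add, smul_smul]
  | succ J ih =>
    rw [Finset.sum_range_succ, ih (by omega), d_Psi H (by omega), Th_succ H (by omega)]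
    obtain ⟨k, rfl⟩ : ∃ k, n = k + 2 + 2 * J := ⟨n - 2 - 2 * J, by omega⟩
    have e1 : k + 2 + 2 * J - 2 * J = k + 2 := by omega
    have e2 : k + 2 + 2 * J - 2 * (J + 1) = k := by omega
    rw [e1, e2, Nat.doubleFactorial_add_two, Nat.factorial_succ]
    have e3 : k + 2 - 1 = k + 1 := by omega
    rw [e3, smul_add, smul_neg, smul_smul, smul_smul, ← add_assoc, ← sub_eq_add_neg, ← sub_smul]
    rw [add_eq_right, smul_eq_zero_of_left]
    have h1 : (k‼ : ℝ) ≠ 0 := by exact_mod_cast (Nat.doubleFactorial_pos k).ne'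
    have h2 : (J.factorial : ℝ) ≠ 0 := by exact_mod_cast J.factorial_ne_zero
    push_cast
    field_simp
    ring

lemma main (H : Setup d u θ ω Ω) (h0 : ∀ j, Ω 0 j = 0) (h0' : ∀ j, Ω j 0 = 0) :
    d (psiForm n u θ Ω) = 0 := by
  unfold psiForm
  simp only [psiJ_eq]
  rw [map_smul, map_sum]
  simp only [map_smul]
  rw [Fin.sum_univ_eq_sum_range (fun j => ((2 ^ j * j.factorial * (n - 2 * j)‼ : ℝ))⁻¹ •
      d (Psi u θ Ω (n - 2 * j) j)), sum_eq H _ (by omega)]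
  rcases Nat.even_or_odd' n with ⟨c, hc | hc⟩
  · have : n - 2 * (n / 2) = 0 := by omega
    rw [this]; simp
  · have e : n - 2 * (n / 2) - 1 = 0 := by omega
    have h2 := Th_succ H (M := 0) (j := n / 2) (by omega)
    rw [Th_pf h0 h0' (by omega), eq_comm, neg_eq_zero] at h2
    have h3 := (smul_eq_zero_iff_right (by positivity)).1 h2
    rw [e, h3, smul_zero, smul_zero]

end Concrete

end ChernEuler

theorem dPsi_eq_zero_of_induced_connection
    {A : Type*} [Ring A] [Algebra ℝ A]
    -- the exterior differential
    (d : A →ₗ[ℝ] A)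
    (n : ℕ)
    -- the tautological coordinates, the forms `θ`, the connection and
    -- curvature forms, with respect to a local oriented orthonormal frame
    -- of `E = ν ⊕ ξ` whose first member is the canonical unit section of `ν`
    (u θ : Fin (n + 1) → A) (ω Ω : Fin (n + 1) → Fin (n + 1) → A)
    -- `θ = du + ωu`
    (hθ : ∀ i, θ i = d (u i) + ∑ j, ω i j * u j)
    -- `Ω = dω + ω ∧ ω`
    (hΩ : ∀ i j, Ω i j = d (ω i j) + ∑ k, ω i k * ω k j)
    -- the connection is an `SO(n+1)`-connection
    (hskew : ∀ i j, ω i j = -ω j i)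
    -- the unit sphere bundle: `Σᵢ uᵢ² = 1`
    (hunit : (∑ i, u i * u i) = 1)
    -- graded commutation rules
    (hu_comm : ∀ i x, u i * x = x * u i)
    (hΩ_comm : ∀ i j x, Ω i j * x = x * Ω i j)
    (hθθ : ∀ i j, θ i * θ j = -(θ j * θ i))
    (hθω : ∀ i j k, θ i * ω j k = -(ω j k * θ i))
    (hωω : ∀ i j k l, ω i j * ω k l = -(ω k l * ω i j))
    -- `d ∘ d = 0` and the graded Leibniz rule
    (hdd : ∀ x, d (d x) = 0)
    (hdu : ∀ i x, d (u i * x) = d (u i) * x + u i * d x)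
    (hdθ : ∀ i x, d (θ i * x) = d (θ i) * x - θ i * d x)
    (hdω : ∀ i j x, d (ω i j * x) = d (ω i j) * x - ω i j * d x)
    (hdΩ : ∀ i j x, d (Ω i j * x) = d (Ω i j) * x + Ω i j * d x)
    -- the connection is induced from `ν ⊕ ξ` with the trivial connection on
    -- `ν`: the first row and column of `ω` and of `Ω` vanish
    (hωrow : ∀ j, ω 0 j = 0) (hωcol : ∀ i, ω i 0 = 0)
    (hΩrow : ∀ j, Ω 0 j = 0) (hΩcol : ∀ i, Ω i 0 = 0) :
    d (psiForm n u θ Ω) = 0 := by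
  exact ChernEuler.main ⟨hθ, hΩ, hskew, hunit, hu_comm, hΩ_comm, hθθ, hθω, hωω, hdd, hdu, hdθ,
    hdω, hdΩ⟩ hΩrow hΩcol

end
end
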